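/- arXiv:2112.09430 — 4 statements merged into one kernel-verified Lean document; each statement's English description precedes it below -/
import Mathlib

section
/- Let p, q ≥ 1 and 1 ≤ k₁ < k₂ ≤ p+q. For any two flags (V_{k₁}, V_{k₂}) and (W_{k₁}, W_{k₂}) in F_{k₁,k₂}, the following are equivalent: (1) there exists g ∈ O(p,q) such that V_{k₁} = gW_{k₁} and V_{k₂} = gW_{k₂}; (2) sign(V_{k₂}) = sign(W_{k₂}), sign(V_{k₁}) = sign(W_{k₁}), and dim(V_{k₁} ∩ rad(V_{k₂})) = dim(W_{k₁} ∩ rad(W_{k₂})), where signatures and radicals are taken with respect to ⟨·,·⟩₀. -/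
open Module

noncomputable section

/-- The radical of a subspace `W` with respect to a bilinear form `B`:
the set of vectors of `W` orthogonal to every vector of `W`. -/
def rad {V : Type*} [AddCommGroup V] [Module ℝ V] (B : LinearMap.BilinForm ℝ V)
    (W : Submodule ℝ V) : Submodule ℝ V :=
  W ⊓ LinearMap.BilinForm.orthogonal B W

/-- The maximal dimension of a subspace of `W` on which `B` is positive definite. -/
def posIdx {V : Type*} [AddCommGroup V] [Module ℝ V] (B : LinearMap.BilinForm ℝ V)
    (W : Submodule ℝ V) : ℕ :=
  sSup {k | ∃ P : Submodule ℝ V, P ≤ W ∧ finrank ℝ P = k ∧ ∀ x ∈ P, x ≠ 0 → 0 < B x x}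

/-- The maximal dimension of a subspace of `W` on which `B` is negative definite. -/
def negIdx {V : Type*} [AddCommGroup V] [Module ℝ V] (B : LinearMap.BilinForm ℝ V)
    (W : Submodule ℝ V) : ℕ :=
  sSup {k | ∃ P : Submodule ℝ V, P ≤ W ∧ finrank ℝ P = k ∧ ∀ x ∈ P, x ≠ 0 → B x x < 0}

/-- The signature `(s, t, u)` of a subspace `W` with respect to a bilinear form `B`. -/
def signat {V : Type*} [AddCommGroup V] [Module ℝ V] (B : LinearMap.BilinForm ℝ V)
    (W : Submodule ℝ V) : ℕ × ℕ × ℕ :=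
  (posIdx B W, negIdx B W, finrank ℝ (rad B W))

/-- The standard inner product of signature `(p, q)` on `ℝ^(p+q)`,
given by the diagonal matrix `I_{p,q}`. -/
def stdForm (p q : ℕ) : LinearMap.BilinForm ℝ (Fin (p + q) → ℝ) :=
  Matrix.toLinearMap₂' ℝ (Matrix.diagonal fun i => if (i : ℕ) < p then (1 : ℝ) else -1)

/-!
By Sylvester's law of inertia, equality of signatures means that `W₁ ≅ V₁` and `W₂ ≅ V₂` as
quadratic spaces, so only compatibility with the inclusions is at stake. Everything rests on Witt's
extension theorem for a symmetric form `B` which may be degenerate: an injective isometry from a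
subspace extends to the whole space as soon as it preserves membership in `ker B`. It is applied
three times: inside `W₁`, to find an isometry `W₁ ≅ V₁` carrying `W₁ ∩ rad W₂` to `V₁ ∩ rad V₂`;
then to extend it to `W₂ ≅ V₂`; and finally to extend the latter to the nondegenerate ambient space.

Witt's theorem is proved one vector at a time: given `w`, `w'` of equal norm with `u = w' - w`
orthogonal to a subspace `H`, one needs an isometry that fixes `H` pointwise and takes `w` to `w'`.
If `u` is anisotropic this is the reflection in `u`, and if `u ∈ ker B` it is a dilatransvection
along `u`. If `u` is isotropic outside `ker B`, it is an Eichler transformation when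
`w ∉ H + ker B + K u`, and otherwise a product of two reflections.
-/

section Witt

variable {K E E' : Type*} [Field K] [AddCommGroup E] [Module K E] [AddCommGroup E'] [Module K E']
  {B : LinearMap.BilinForm K E} {B' : LinearMap.BilinForm K E'} {H : Submodule K E} {w w' : E}

theorem exists_mem_orthogonal_apply_ne_zero [FiniteDimensional K H]
    (hw : w ∉ H ⊔ LinearMap.ker B) : ∃ v ∈ B.orthogonal H, B w v ≠ 0 := by
  by_contra! hall
  have hBw : B w ∈ H.map B := by
    rw [← Subspace.dualCoannihilator_dualAnnihilator_eq (W := H.map B)]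
    refine (Submodule.mem_dualAnnihilator _).2 fun v hv => hall v fun x hx => ?_
    exact (Submodule.mem_dualCoannihilator _).1 hv _ (Submodule.mem_map_of_mem hx)
  obtain ⟨x, hx, hxw⟩ := hBw
  refine hw (Submodule.mem_sup.2 ⟨x, hx, w - x, ?_, add_sub_cancel x w⟩)
  rw [LinearMap.mem_ker, map_sub, hxw, sub_self]

theorem exists_le_ker_apply_ne_zero_and_ne_zero (hw : w ∉ H) (hw' : w' ∉ H) :
    ∃ l : Dual K E, H ≤ LinearMap.ker l ∧ l w ≠ 0 ∧ l w' ≠ 0 := by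
  obtain ⟨l, hlw, hlH⟩ := Submodule.exists_le_ker_of_notMem hw
  obtain ⟨l', hlw', hlH'⟩ := Submodule.exists_le_ker_of_notMem hw'
  by_cases hlw'0 : l w' = 0
  · by_cases hl'w0 : l' w = 0
    · refine ⟨l + l', fun x hx => ?_, ?_, ?_⟩
      · rw [LinearMap.mem_ker, LinearMap.add_apply, hlH hx, hlH' hx, add_zero]
      · rwa [LinearMap.add_apply, hl'w0, add_zero]
      · rwa [LinearMap.add_apply, hlw'0, zero_add]
    · exact ⟨l', hlH', hl'w0, hlw'⟩
  · exact ⟨l, hlH, hlw, hlw'0⟩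

/-- The reflection `x ↦ x - 2 B(v, x) / B(v, v) • v` in an anisotropic vector `v`. -/
def reflectionIsometry (hB : B.IsSymm) {v : E} (hv : B v v ≠ 0) : B.IsometryEquiv B :=
  { reflection (x := v) (f := (2 / B v v) • B v) (by simp [hv]) with
    map_app' := fun x y => by
      simp only [AddHom.toFun_eq_coe, LinearMap.coe_toAddHom, LinearEquiv.coe_coe,
        reflection_apply, LinearMap.smul_apply, smul_eq_mul, map_sub, map_smul,
        LinearMap.sub_apply, hB.eq x v]
      field_simp
      ring }

theorem reflectionIsometry_apply (hB : B.IsSymm) {v : E} (hv : B v v ≠ 0) (x : E) :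
    reflectionIsometry hB hv x = x - (2 / B v v * B v x) • v :=
  rfl

theorem reflectionIsometry_apply_eq_self (hB : B.IsSymm) {v : E} (hv : B v v ≠ 0) {x : E}
    (hx : B x v = 0) : reflectionIsometry hB hv x = x := by
  rw [reflectionIsometry_apply, hB.eq v x, hx, mul_zero, zero_smul, sub_zero]

theorem reflectionIsometry_sub_apply (hB : B.IsSymm)
    (hu : B (w' - w) (w' - w) ≠ 0) (hww' : B w w = B w' w') :
    reflectionIsometry hB hu w = w' := by
  have hnorm : B (w' - w) (w' - w) = -(2 * B (w' - w) w) := by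
    simp only [map_sub, LinearMap.sub_apply, hB.eq w w']
    linear_combination -hww'
  have hcoef : 2 / B (w' - w) (w' - w) * B (w' - w) w = -1 := by
    rw [div_mul_eq_mul_div, div_eq_iff hu, hnorm]
    ring
  rw [reflectionIsometry_apply, hcoef]
  module

theorem exists_isometryEquiv_fixing_of_anisotropic_sub (hB : B.IsSymm)
    (horth : w' - w ∈ B.orthogonal H) (hww' : B w w = B w' w')
    (hu : B (w' - w) (w' - w) ≠ 0) :
    ∃ g : B.IsometryEquiv B, (∀ h ∈ H, g h = h) ∧ g w = w' :=
  ⟨reflectionIsometry hB hu, fun h hh => reflectionIsometry_apply_eq_self hB hu (horth h hh),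
    reflectionIsometry_sub_apply hB hu hww'⟩

theorem exists_isometryEquiv_fixing_of_isotropic_sub_of_anisotropic [NeZero (2 : K)] (hB : B.IsSymm)
    {v : E} (horth : w' - w ∈ B.orthogonal H) (hww' : B w w = B w' w')
    (hu : B (w' - w) (w' - w) = 0) (hv : v ∈ B.orthogonal H) (hvv : B v v ≠ 0)
    (hvw : B v w ≠ 0) (hvw' : B v w' ≠ 0) :
    ∃ g : B.IsometryEquiv B, (∀ h ∈ H, g h = h) ∧ g w = w' := by
  set τ := reflectionIsometry hB hvv
  have hτH : ∀ h ∈ H, τ h = h := fun h hh => reflectionIsometry_apply_eq_self hB hvv (hv h hh)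
  have hτw : B (τ w) (τ w) = B w' w' := (τ.map_app w w).trans hww'
  have hτorth : w' - τ w ∈ B.orthogonal H := by
    have hsub : w' - τ w = (w' - w) + (2 / B v v * B v w) • v := by
      rw [reflectionIsometry_apply]
      module
    exact hsub ▸ add_mem horth (Submodule.smul_mem _ _ hv)
  have hτsub : B (w' - τ w) (w' - τ w) ≠ 0 := by
    have hval : B (w' - τ w) (w' - τ w) = 2 * 2 * B v w * B v w' / B v v := by
      simp only [map_sub, LinearMap.sub_apply, hB.eq w' w] at hu
      simp only [τ, reflectionIsometry_apply, map_sub, LinearMap.sub_apply, map_smul,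
        LinearMap.smul_apply, smul_eq_mul, hB.eq w v, hB.eq w' v, hB.eq w' w]
      field_simp
      linear_combination B v v * hu
    rw [hval]
    have := two_ne_zero (α := K)
    positivity
  obtain ⟨σ, hσH, hσw⟩ := exists_isometryEquiv_fixing_of_anisotropic_sub hB hτorth hτw hτsub
  exact ⟨τ.trans σ, fun h hh => (congrArg σ (hτH h hh)).trans (hσH h hh), hσw⟩

theorem exists_anisotropic_mem_orthogonal_apply_ne_zero [NeZero (2 : K)] (hB : B.IsSymm)
    [FiniteDimensional K H] {u : E} (hu : u ∈ B.orthogonal H)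
    (huu : B u u = 0) (hunot : u ∉ H ⊔ LinearMap.ker B) :
    ∃ v ∈ B.orthogonal H, B v v ≠ 0 ∧ B v u ≠ 0 := by
  obtain ⟨v, hv, huv⟩ := exists_mem_orthogonal_apply_ne_zero hunot
  have hvu : B v u ≠ 0 := hB.eq v u ▸ huv
  by_cases hvv : B v v = 0
  · have hnorm : B (v + u) (v + u) = 2 * B v u := by
      simp only [map_add, LinearMap.add_apply, hvv, huu, hB.eq u v]
      ring
    refine ⟨v + u, add_mem hv hu, hnorm ▸ mul_ne_zero two_ne_zero hvu, ?_⟩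
    rwa [map_add, LinearMap.add_apply, huu, add_zero]
  · exact ⟨v, hv, hvv, hvu⟩

theorem exists_isometryEquiv_fixing_of_isotropic_sub_of_mem [NeZero (2 : K)] (hB : B.IsSymm)
    [FiniteDimensional K H] (horth : w' - w ∈ B.orthogonal H) (hww' : B w w = B w' w')
    (hu : B (w' - w) (w' - w) = 0)
    (hw : w ∉ H ⊔ LinearMap.ker B) (hw' : w' ∉ H ⊔ LinearMap.ker B)
    (hmem : w ∈ H ⊔ LinearMap.ker B ⊔ K ∙ (w' - w)) :
    ∃ g : B.IsometryEquiv B, (∀ h ∈ H, g h = h) ∧ g w = w' := by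
  obtain ⟨z, hz, _, hcu, hzw⟩ := Submodule.mem_sup.1 hmem
  obtain ⟨c, rfl⟩ := Submodule.mem_span_singleton.1 hcu
  have hzw' : z + (c + 1) • (w' - w) = w' := by
    rw [add_smul, ← add_assoc, hzw, one_smul, add_sub_cancel]
  have hc : c ≠ 0 := by
    rintro rfl
    rw [zero_smul, add_zero] at hzw
    exact hw (hzw ▸ hz)
  have hc' : c + 1 ≠ 0 := by
    intro hc0
    rw [hc0, zero_smul, add_zero] at hzw'
    exact hw' (hzw' ▸ hz)
  have hunot : w' - w ∉ H ⊔ LinearMap.ker B := fun h =>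
    hw (hzw ▸ add_mem hz (Submodule.smul_mem _ c h))
  obtain ⟨v, hv, hvv, hvu⟩ := exists_anisotropic_mem_orthogonal_apply_ne_zero hB horth hu hunot
  have hvz : B v z = 0 := by
    obtain ⟨h, hh, r, hr, rfl⟩ := Submodule.mem_sup.1 hz
    rw [map_add, hB.eq v h, hv h hh, hB.eq v r, LinearMap.mem_ker.1 hr, LinearMap.zero_apply,
      add_zero]
  have hvadd (a : K) : B v (z + a • (w' - w)) = a * B v (w' - w) := by
    rw [map_add, hvz, zero_add, map_smul, smul_eq_mul]
  refine exists_isometryEquiv_fixing_of_isotropic_sub_of_anisotropic hB horth hww' hu hv hvv ?_ ?_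
  · rw [← hzw, hvadd]
    exact mul_ne_zero hc hvu
  · rw [← hzw', hvadd]
    exact mul_ne_zero hc' hvu

/-- The Eichler transformation attached to an isotropic vector `u` and a vector `v` orthogonal
to `u`. It fixes every vector orthogonal to both, and moves a vector `x` orthogonal to `u` along
`u` by `B(v, x)`. -/
def eichlerIsometry [NeZero (2 : K)] (hB : B.IsSymm) {u v : E} (hu : B u u = 0)
    (huv : B u v = 0) : B.IsometryEquiv B where
  toFun x := x + B v x • u - B u x • v - (B v v / 2 * B u x) • u
  invFun x := x - B v x • u + B u x • v - (B v v / 2 * B u x) • u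
  map_add' x y := by
    simp only [map_add]
    module
  map_smul' c x := by
    simp only [map_smul, smul_eq_mul, RingHom.id_apply]
    module
  left_inv x := by
    have := two_ne_zero (α := K)
    simp only [map_add, map_sub, map_smul, smul_eq_mul, hu, huv, hB.eq v u]
    match_scalars <;> field
  right_inv x := by
    have := two_ne_zero (α := K)
    simp only [map_add, map_sub, map_smul, smul_eq_mul, hu, huv, hB.eq v u]
    match_scalars <;> field
  map_app' x y := by
    have := two_ne_zero (α := K)
    simp only [map_add, map_sub, map_smul, smul_eq_mul, LinearMap.add_apply, LinearMap.sub_apply,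
      LinearMap.smul_apply, hu, huv, hB.eq v u, hB.eq x u, hB.eq x v]
    field

theorem eichlerIsometry_apply_of_orthogonal [NeZero (2 : K)] (hB : B.IsSymm) {u v x : E}
    (hu : B u u = 0) (huv : B u v = 0) (hux : B u x = 0) :
    eichlerIsometry hB hu huv x = x + B v x • u := by
  change x + B v x • u - B u x • v - (B v v / 2 * B u x) • u = x + B v x • u
  rw [hux, mul_zero, zero_smul, zero_smul, sub_zero, sub_zero]

theorem exists_isometryEquiv_fixing_of_isotropic_sub_of_notMem [NeZero (2 : K)] (hB : B.IsSymm)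
    [FiniteDimensional K H] (horth : w' - w ∈ B.orthogonal H) (hww' : B w w = B w' w')
    (hu : B (w' - w) (w' - w) = 0)
    (hw : w ∉ H ⊔ LinearMap.ker B ⊔ K ∙ (w' - w)) :
    ∃ g : B.IsometryEquiv B, (∀ h ∈ H, g h = h) ∧ g w = w' := by
  rw [sup_right_comm] at hw
  obtain ⟨v, hv, hwv⟩ := exists_mem_orthogonal_apply_ne_zero hw
  have huv : B (w' - w) ((B w v)⁻¹ • v) = 0 := by
    rw [map_smul, hv _ (Submodule.mem_sup_right (Submodule.mem_span_singleton_self _)), smul_zero]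
  have huw : B (w' - w) w = 0 := by
    refine (mul_eq_zero_iff_left (two_ne_zero (α := K))).1 ?_
    simp only [map_sub, LinearMap.sub_apply, hB.eq w w'] at hu ⊢
    linear_combination -hu - hww'
  refine ⟨eichlerIsometry hB hu huv, fun h hh => ?_, ?_⟩
  · rw [eichlerIsometry_apply_of_orthogonal hB hu huv ((hB.eq _ _).trans (horth h hh)),
      hB.eq _ h, map_smul, hv h (Submodule.mem_sup_left hh), smul_zero, zero_smul, add_zero]
  · rw [eichlerIsometry_apply_of_orthogonal hB hu huv huw, hB.eq _ w, map_smul, smul_eq_mul,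
      inv_mul_cancel₀ hwv, one_smul, add_sub_cancel]

theorem exists_isometryEquiv_fixing_of_sub_mem_ker (hB : B.IsSymm)
    (hu : w' - w ∈ LinearMap.ker B) (hw : w ∉ H) (hw' : w' ∉ H) :
    ∃ g : B.IsometryEquiv B, (∀ h ∈ H, g h = h) ∧ g w = w' := by
  obtain ⟨l, hlH, hlw, hlw'⟩ := exists_le_ker_apply_ne_zero_and_ne_zero hw hw'
  have hunit : IsUnit (1 + ((l w)⁻¹ • l) (w' - w)) := by
    have hval : 1 + ((l w)⁻¹ • l) (w' - w) = (l w)⁻¹ * l w' := by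
      simp only [LinearMap.smul_apply, map_sub, smul_eq_mul]
      field
    exact hval ▸ (mul_ne_zero (inv_ne_zero hlw) hlw').isUnit
  have hBu (x : E) : B (w' - w) x = 0 := by rw [LinearMap.mem_ker.1 hu, LinearMap.zero_apply]
  refine ⟨{ LinearEquiv.dilatransvection hunit with map_app' := fun x y => ?_ }, fun h hh => ?_, ?_⟩
  · change B (x + ((l w)⁻¹ • l) x • (w' - w)) (y + ((l w)⁻¹ • l) y • (w' - w)) = B x y
    simp only [map_add, map_smul, LinearMap.add_apply, LinearMap.smul_apply, hBu, hB.eq x,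
      smul_zero, add_zero]
  · change h + ((l w)⁻¹ • l) h • (w' - w) = h
    rw [LinearMap.smul_apply, LinearMap.mem_ker.1 (hlH hh), smul_zero, zero_smul, add_zero]
  · change w + ((l w)⁻¹ • l) w • (w' - w) = w'
    rw [LinearMap.smul_apply, smul_eq_mul, inv_mul_cancel₀ hlw, one_smul, add_sub_cancel]

theorem exists_isometryEquiv_fixing [NeZero (2 : K)] (hB : B.IsSymm) [FiniteDimensional K H]
    (horth : w' - w ∈ B.orthogonal H) (hww' : B w w = B w' w') (hw : w ∉ H) (hw' : w' ∉ H)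
    (hker : ∀ h ∈ H, h + w ∈ LinearMap.ker B ↔ h + w' ∈ LinearMap.ker B) :
    ∃ g : B.IsometryEquiv B, (∀ h ∈ H, g h = h) ∧ g w = w' := by
  by_cases hu : w' - w ∈ LinearMap.ker B
  · exact exists_isometryEquiv_fixing_of_sub_mem_ker hB hu hw hw'
  have hnot (h : E) : ¬ (h + w ∈ LinearMap.ker B ∧ h + w' ∈ LinearMap.ker B) :=
    fun ⟨hhw, hhw'⟩ => hu (by simpa using sub_mem hhw' hhw)
  have hwker : w ∉ H ⊔ LinearMap.ker B := fun hmem => by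
    obtain ⟨h, hh, r, hr, rfl⟩ := Submodule.mem_sup.1 hmem
    have hneg : -h + (h + r) ∈ LinearMap.ker B := by rwa [neg_add_cancel_left]
    exact hnot _ ⟨hneg, (hker _ (neg_mem hh)).1 hneg⟩
  have hwker' : w' ∉ H ⊔ LinearMap.ker B := fun hmem => by
    obtain ⟨h, hh, r, hr, rfl⟩ := Submodule.mem_sup.1 hmem
    have hneg : -h + (h + r) ∈ LinearMap.ker B := by rwa [neg_add_cancel_left]
    exact hnot _ ⟨(hker _ (neg_mem hh)).2 hneg, hneg⟩
  by_cases huu : B (w' - w) (w' - w) = 0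
  · by_cases hmem : w ∈ H ⊔ LinearMap.ker B ⊔ K ∙ (w' - w)
    · exact exists_isometryEquiv_fixing_of_isotropic_sub_of_mem hB horth hww' huu hwker hwker' hmem
    · exact exists_isometryEquiv_fixing_of_isotropic_sub_of_notMem hB horth hww' huu hmem
  · exact exists_isometryEquiv_fixing_of_anisotropic_sub hB horth hww' huu

theorem isometryEquiv_apply_mem_ker_iff (g : B.IsometryEquiv B') {x : E} :
    g x ∈ LinearMap.ker B' ↔ x ∈ LinearMap.ker B := by
  simp only [LinearMap.mem_ker, LinearMap.ext_iff, LinearMap.zero_apply,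
    ← g.map_app, ← (EquivLike.surjective g).forall (p := fun y => B' (g x) y = 0)]

variable {T : Type*} [AddCommGroup T] [Module K T] {B₀ : LinearMap.BilinForm K T}

theorem witt_extension_insert [NeZero (2 : K)] (hB' : B'.IsSymm)
    {i : B₀ →bᵢ B} {f : B₀ →bᵢ B'} (hi : Function.Injective i) (hf : Function.Injective f)
    (hker : ∀ t, i t ∈ LinearMap.ker B ↔ f t ∈ LinearMap.ker B') {S : Submodule K T}
    [FiniteDimensional K S] (g : B.IsometryEquiv B') (hg : ∀ s ∈ S, g (i s) = f s) (t : T) :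
    ∃ g' : B.IsometryEquiv B', (∀ s ∈ S, g' (i s) = f s) ∧ g' (i t) = f t := by
  by_cases ht : t ∈ S
  · exact ⟨g, hg, hg t ht⟩
  have horth : f t - g (i t) ∈ B'.orthogonal (S.map f.toLinearMap) := by
    rintro _ ⟨s, hs, rfl⟩
    change B' (f s) (f t - g (i t)) = 0
    rw [map_sub, f.map_app, ← hg s hs, g.map_app, i.map_app, sub_self]
  have hnorm : B' (g (i t)) (g (i t)) = B' (f t) (f t) := by
    rw [g.map_app, i.map_app, f.map_app]
  have hgt : g (i t) ∉ S.map f.toLinearMap := by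
    rintro ⟨s, hs, hst⟩
    exact ht (hi (EquivLike.injective g ((hg s hs).trans hst)) ▸ hs)
  have hft : f t ∉ S.map f.toLinearMap := by
    rintro ⟨s, hs, hst⟩
    exact ht (hf hst ▸ hs)
  have hkert : ∀ h ∈ S.map f.toLinearMap,
      h + g (i t) ∈ LinearMap.ker B' ↔ h + f t ∈ LinearMap.ker B' := by
    rintro _ ⟨s, hs, rfl⟩
    change f s + g (i t) ∈ _ ↔ f s + f t ∈ _
    rw [← hg s hs, ← map_add, ← map_add, isometryEquiv_apply_mem_ker_iff, hker, map_add, hg s hs]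
  obtain ⟨σ, hσ, hσt⟩ := exists_isometryEquiv_fixing hB' horth hnorm hgt hft hkert
  refine ⟨g.trans σ, fun s hs => ?_, hσt⟩
  exact (congrArg σ (hg s hs)).trans (hσ _ (Submodule.mem_map_of_mem hs))

theorem witt_extension [NeZero (2 : K)] [FiniteDimensional K T] (hB' : B'.IsSymm)
    (hBB' : B.Equivalent B') {i : B₀ →bᵢ B} {f : B₀ →bᵢ B'} (hi : Function.Injective i)
    (hf : Function.Injective f)
    (hker : ∀ t, i t ∈ LinearMap.ker B ↔ f t ∈ LinearMap.ker B') :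
    ∃ g : B.IsometryEquiv B', ∀ t, g (i t) = f t := by
  classical
  have hfinset (s : Finset T) :
      ∃ g : B.IsometryEquiv B', ∀ t ∈ Submodule.span K s, g (i t) = f t := by
    induction s using Finset.induction_on with
    | empty =>
      obtain ⟨g⟩ := hBB'
      refine ⟨g, fun t ht => ?_⟩
      obtain rfl : t = 0 := by simpa using ht
      simp only [map_zero]
    | insert a s _ ih =>
      obtain ⟨g, hg⟩ := ih
      obtain ⟨g', hgs, hga⟩ := witt_extension_insert hB' hi hf hker g hg a
      refine ⟨g', fun t ht => ?_⟩
      rw [Finset.coe_insert, Submodule.mem_span_insert] at ht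
      obtain ⟨c, s, hs, rfl⟩ := ht
      simp only [map_add, map_smul, hgs s hs, hga]
  obtain ⟨s, hs⟩ := Module.finite_def.1 (inferInstance : Module.Finite K T)
  obtain ⟨g, hg⟩ := hfinset s
  exact ⟨g, fun t => hg t (hs ▸ Submodule.mem_top)⟩

theorem map_eq_of_forall_apply_eq {g : E →ₗ[K] E'} {W : Submodule K E} {V : Submodule K E'}
    (e : W ≃ₗ[K] V) (h : ∀ x : W, g x = e x) : W.map g = V := by
  refine le_antisymm (Submodule.map_le_iff_le_comap.2 fun x hx => ?_) fun y hy => ?_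
  · rw [Submodule.mem_comap, h ⟨x, hx⟩]
    exact (e ⟨x, hx⟩).2
  · exact ⟨e.symm ⟨y, hy⟩, (e.symm ⟨y, hy⟩).2, by rw [h, e.apply_symm_apply]⟩

theorem exists_isometryEquiv_map_eq_of_le_ker [NeZero (2 : K)] (hB' : B'.IsSymm)
    (hBB' : B.Equivalent B') {N : Submodule K E} {N' : Submodule K E'} [FiniteDimensional K N]
    [FiniteDimensional K N']
    (hN : N ≤ LinearMap.ker B) (hN' : N' ≤ LinearMap.ker B') (hdim : finrank K N = finrank K N') :
    ∃ g : B.IsometryEquiv B', N.map g.toLinearMap = N' := by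
  let e : N ≃ₗ[K] N' := LinearEquiv.ofFinrankEq N N' hdim
  let i : (0 : LinearMap.BilinForm K N) →bᵢ B :=
    { N.subtype with map_app' := fun x y => LinearMap.congr_fun (LinearMap.mem_ker.1 (hN x.2)) y }
  let f : (0 : LinearMap.BilinForm K N) →bᵢ B' :=
    { N'.subtype ∘ₗ e.toLinearMap with
      map_app' := fun x y => LinearMap.congr_fun (LinearMap.mem_ker.1 (hN' (e x).2)) (e y) }
  obtain ⟨g, hg⟩ := witt_extension hB' hBB' (i := i) (f := f)
    Subtype.val_injective (Subtype.val_injective.comp e.injective)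
    fun x => iff_of_true (hN x.2) (hN' (e x).2)
  exact ⟨g, map_eq_of_forall_apply_eq e hg⟩

/-- The inclusion of `U` into `W`, as an isometry for the restrictions of `B`. -/
def restrictInclusion (B : LinearMap.BilinForm K E) {U W : Submodule K E} (h : U ≤ W) :
    B.restrict U →bᵢ B.restrict W where
  toLinearMap := Submodule.inclusion h
  map_app' _ _ := rfl

/-- The inclusion of `W` into the whole space, as an isometry for the restriction of `B`. -/
def restrictSubtype (B : LinearMap.BilinForm K E) (W : Submodule K E) : B.restrict W →bᵢ B where
  toLinearMap := W.subtype
  map_app' _ _ := rfl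

/-- An isometry induces an isometry from each subspace onto its image. -/
def restrictIsometryEquiv (g : B.IsometryEquiv B') (W : Submodule K E) :
    (B.restrict W).IsometryEquiv (B'.restrict (W.map g.toLinearMap)) where
  toLinearEquiv := g.toLinearEquiv.submoduleMap W
  map_app' x y := g.map_app y x

theorem witt_extension_of_ker_eq_bot [NeZero (2 : K)] (hB : B.IsSymm)
    (hker : LinearMap.ker B = ⊥) {V W : Submodule K E} [FiniteDimensional K W]
    (e : (B.restrict W).IsometryEquiv (B.restrict V)) :
    ∃ g : B.IsometryEquiv B, ∀ x : W, g x = e x := by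
  refine witt_extension hB (.refl B) (i := restrictSubtype B W)
    (f := (restrictSubtype B V).comp e.toIsometry) Subtype.val_injective
    (Subtype.val_injective.comp (EquivLike.injective e)) fun x => ?_
  simp only [hker, Submodule.mem_bot]
  exact Submodule.coe_eq_zero.trans
    ((EmbeddingLike.map_eq_zero_iff (f := e)).symm.trans Submodule.coe_eq_zero.symm)

end Witt

section Sylvester

theorem exists_equiv_apply_eq_of_ncard_fiber_eq {ι ι' α : Type*} [Finite ι] [Finite ι']
    {w : ι → α} {w' : ι' → α} (h : ∀ a, {i | w i = a}.ncard = {i | w' i = a}.ncard) :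
    ∃ σ : ι ≃ ι', ∀ i, w' (σ i) = w i := by
  have hfiber (a : α) : Nonempty ({i // w i = a} ≃ {i // w' i = a}) := Finite.card_eq.1 (h a)
  exact ⟨Equiv.ofFiberEquiv fun a => (hfiber a).some, fun i => Equiv.ofFiberEquiv_map _ i⟩

theorem weightedSumSquares_equivalent_of_equiv {R ι ι' : Type*} [CommRing R] [Fintype ι]
    [Fintype ι'] {w : ι → R} {w' : ι' → R} (σ : ι ≃ ι') (hσ : ∀ i, w' (σ i) = w i) :
    (QuadraticMap.weightedSumSquares R w).Equivalent (QuadraticMap.weightedSumSquares R w') := by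
  refine ⟨⟨LinearEquiv.funCongrLeft R R σ.symm, fun x => ?_⟩⟩
  simp only [AddHom.toFun_eq_coe, LinearMap.coe_toAddHom, LinearEquiv.coe_coe,
    QuadraticMap.weightedSumSquares_apply, LinearEquiv.funCongrLeft_apply, LinearMap.funLeft_apply]
  rw [← σ.sum_comp]
  simp only [hσ, Equiv.symm_apply_apply]

theorem quadraticForm_equivalent_of_signature_eq {M M' : Type*} [AddCommGroup M] [Module ℝ M]
    [FiniteDimensional ℝ M] [AddCommGroup M'] [Module ℝ M'] [FiniteDimensional ℝ M']
    {Q : QuadraticForm ℝ M} {Q' : QuadraticForm ℝ M'}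
    (hpos : sigPos Q = sigPos Q') (hneg : sigNeg Q = sigNeg Q')
    (hrad : finrank ℝ Q.radical = finrank ℝ Q'.radical) : Q.Equivalent Q' := by
  obtain ⟨w, hw⟩ := Q.equivalent_signType_weighted_sum_squared
  obtain ⟨w', hw'⟩ := Q'.equivalent_signType_weighted_sum_squared
  rw [QuadraticForm.sigPos_of_equiv_weightedSumSquares hw,
    QuadraticForm.sigPos_of_equiv_weightedSumSquares hw'] at hpos
  rw [QuadraticForm.sigNeg_of_equiv_weightedSumSquares hw,
    QuadraticForm.sigNeg_of_equiv_weightedSumSquares hw'] at hneg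
  rw [QuadraticForm.finrank_radical_of_equiv_weightedSumSquares hw,
    QuadraticForm.finrank_radical_of_equiv_weightedSumSquares hw'] at hrad
  have hpos_iff (s : SignType) : (0 : ℝ) < s ↔ s = 1 := by cases s <;> simp
  have hneg_iff (s : SignType) : (s : ℝ) < 0 ↔ s = -1 := by cases s <;> simp
  have hzero_iff (s : SignType) : (s : ℝ) = 0 ↔ s = 0 := by cases s <;> simp
  simp only [hpos_iff] at hpos
  simp only [hneg_iff] at hneg
  simp only [hzero_iff] at hrad
  obtain ⟨σ, hσ⟩ := exists_equiv_apply_eq_of_ncard_fiber_eq (w := w) (w' := w') fun s => by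
    cases s
    exacts [hrad, hneg, hpos]
  refine hw.trans (.trans (weightedSumSquares_equivalent_of_equiv σ fun i => ?_) hw'.symm)
  rw [hσ]

theorem equivalent_iff_toQuadraticMap_equivalent {R M M' : Type*} [CommRing R] [Invertible (2 : R)]
    [AddCommGroup M] [Module R M] [AddCommGroup M'] [Module R M'] {B : LinearMap.BilinForm R M}
    {B' : LinearMap.BilinForm R M'} (hB : B.IsSymm) (hB' : B'.IsSymm) :
    B.Equivalent B' ↔ B.toQuadraticMap.Equivalent B'.toQuadraticMap := by
  constructor
  · rintro ⟨g⟩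
    exact ⟨{ g with map_app' := fun x => g.map_app x x }⟩
  · rintro ⟨g⟩
    have hpolar (x y : M) : QuadraticMap.associated B'.toQuadraticMap (g x) (g y) =
        QuadraticMap.associated B.toQuadraticMap x y := by
      simp only [QuadraticMap.associated_apply, ← map_add, g.map_app]
    rw [QuadraticMap.associated_left_inverse R hB.eq,
      QuadraticMap.associated_left_inverse R hB'.eq] at hpolar
    exact ⟨{ g with map_app' := hpolar }⟩

end Sylvester

section Signature

variable {E : Type*} [AddCommGroup E] [Module ℝ E] {B : LinearMap.BilinForm ℝ E}

theorem posIdx_eq_sigPos (B : LinearMap.BilinForm ℝ E) (W : Submodule ℝ E)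
    [FiniteDimensional ℝ W] : posIdx B W = sigPos (B.restrict W).toQuadraticMap := by
  refine Eq.trans (congrArg sSup (Set.ext fun k => ⟨?_, ?_⟩))
    (sigPos_isGreatest (B.restrict W).toQuadraticMap).csSup_eq
  · rintro ⟨P, hPW, rfl, hP⟩
    exact ⟨P.comap W.subtype, (Submodule.comapSubtypeEquivOfLe hPW).finrank_eq,
      fun x hx => hP x x.2 (by simpa using hx)⟩
  · rintro ⟨P, rfl, hP⟩
    refine ⟨P.map W.subtype, Submodule.map_subtype_le _ _, Submodule.finrank_map_subtype_eq _ _, ?_⟩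
    rintro _ ⟨x, hx, rfl⟩ hx0
    exact hP ⟨x, hx⟩ (by simpa using hx0)

theorem negIdx_eq_sigNeg (B : LinearMap.BilinForm ℝ E) (W : Submodule ℝ E)
    [FiniteDimensional ℝ W] : negIdx B W = sigNeg (B.restrict W).toQuadraticMap := by
  have hneg : negIdx B W = posIdx (-B) W := by
    simp only [negIdx, posIdx, LinearMap.neg_apply, Left.neg_pos_iff]
  rw [hneg, posIdx_eq_sigPos, ← sigPos_neg]
  rfl

theorem coe_mem_rad_iff (hB : B.IsSymm) {W : Submodule ℝ E} (x : W) :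
    (x : E) ∈ rad B W ↔ x ∈ LinearMap.ker (B.restrict W) := by
  simp only [rad, Submodule.mem_inf, x.2, true_and, LinearMap.BilinForm.mem_orthogonal_iff,
    LinearMap.mem_ker, LinearMap.ext_iff, Subtype.forall, hB.eq _ (x : E)]
  rfl

theorem finrank_rad_eq_finrank_radical (hB : B.IsSymm) (W : Submodule ℝ E) :
    finrank ℝ (rad B W) = finrank ℝ (B.restrict W).toQuadraticMap.radical := by
  have hker : (B.restrict W).toQuadraticMap.radical = LinearMap.ker (B.restrict W) := by
    rw [QuadraticMap.radical_eq_ker_associated,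
      QuadraticMap.associated_left_inverse ℝ (hB.restrict W).eq]
  have hcomap : (rad B W).comap W.subtype = LinearMap.ker (B.restrict W) :=
    Submodule.ext (coe_mem_rad_iff hB)
  rw [hker, ← hcomap]
  exact (Submodule.comapSubtypeEquivOfLe inf_le_left).finrank_eq.symm

theorem signat_eq_signat_iff_equivalent {E' : Type*} [AddCommGroup E'] [Module ℝ E']
    {B' : LinearMap.BilinForm ℝ E'} (hB : B.IsSymm) (hB' : B'.IsSymm) {W : Submodule ℝ E}
    {W' : Submodule ℝ E'} [FiniteDimensional ℝ W] [FiniteDimensional ℝ W'] :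
    signat B W = signat B' W' ↔ (B.restrict W).Equivalent (B'.restrict W') := by
  rw [equivalent_iff_toQuadraticMap_equivalent (hB.restrict W) (hB'.restrict W')]
  simp only [signat, Prod.mk.injEq, posIdx_eq_sigPos, negIdx_eq_sigNeg,
    finrank_rad_eq_finrank_radical hB, finrank_rad_eq_finrank_radical hB']
  exact ⟨fun ⟨hpos, hneg, hrad⟩ => quadraticForm_equivalent_of_signature_eq hpos hneg hrad,
    fun h => ⟨h.sigPos_eq, h.sigNeg_eq, h.rank_radical_eq⟩⟩

end Signature

section Flags

variable {E : Type*} [AddCommGroup E] [Module ℝ E] {B : LinearMap.BilinForm ℝ E}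

theorem rad_map_isometryEquiv {E' : Type*} [AddCommGroup E'] [Module ℝ E']
    {B' : LinearMap.BilinForm ℝ E'} (g : B.IsometryEquiv B') (W : Submodule ℝ E) :
    rad B' (W.map g.toLinearMap) = (rad B W).map g.toLinearMap := by
  ext y
  constructor
  · rintro ⟨⟨x, hx, rfl⟩, horth⟩
    exact ⟨x, ⟨hx, fun z hz => (g.map_app x z).symm.trans (horth _ (Submodule.mem_map_of_mem hz))⟩,
      rfl⟩
  · rintro ⟨x, ⟨hx, horth⟩, rfl⟩
    refine ⟨Submodule.mem_map_of_mem hx, ?_⟩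
    rintro _ ⟨z, hz, rfl⟩
    exact (g.map_app x z).trans (horth z hz)

theorem comap_rad_le_ker_restrict (hB : B.IsSymm) {U W : Submodule ℝ E} (hUW : U ≤ W) :
    (rad B W).comap U.subtype ≤ LinearMap.ker (B.restrict U) := fun x hx =>
  (coe_mem_rad_iff hB x).1 ⟨x.2, fun y hy => hx.2 y (hUW hy)⟩

theorem exists_restrict_isometryEquiv_coe_mem_rad_iff (hB : B.IsSymm) {V₁ V₂ W₁ W₂ : Submodule ℝ E}
    [FiniteDimensional ℝ V₁] [FiniteDimensional ℝ W₁] (hV : V₁ ≤ V₂) (hW : W₁ ≤ W₂)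
    (h₁ : (B.restrict W₁).Equivalent (B.restrict V₁))
    (hdim : finrank ℝ (W₁ ⊓ rad B W₂ : Submodule ℝ E) =
      finrank ℝ (V₁ ⊓ rad B V₂ : Submodule ℝ E)) :
    ∃ e : (B.restrict W₁).IsometryEquiv (B.restrict V₁),
      ∀ x : W₁, (x : E) ∈ rad B W₂ ↔ (e x : E) ∈ rad B V₂ := by
  have hfinrank (U₁ U₂ : Submodule ℝ E) :
      finrank ℝ ((rad B U₂).comap U₁.subtype) = finrank ℝ (U₁ ⊓ rad B U₂ : Submodule ℝ E) := by
    rw [← Submodule.map_comap_subtype, Submodule.finrank_map_subtype_eq]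
  obtain ⟨e, he⟩ := exists_isometryEquiv_map_eq_of_le_ker (hB.restrict V₁) h₁
    (comap_rad_le_ker_restrict hB hW) (comap_rad_le_ker_restrict hB hV)
    (by rw [hfinrank, hfinrank, hdim])
  refine ⟨e, fun x => ?_⟩
  change x ∈ (rad B W₂).comap W₁.subtype ↔ e x ∈ (rad B V₂).comap V₁.subtype
  rw [← he]
  exact ((EquivLike.injective e).mem_set_image).symm

theorem witt_extension_of_mem_rad_iff (hB : B.IsSymm) {V₁ V₂ W₁ W₂ : Submodule ℝ E}
    [FiniteDimensional ℝ W₁] (hV : V₁ ≤ V₂) (hW : W₁ ≤ W₂)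
    (h₂ : (B.restrict W₂).Equivalent (B.restrict V₂))
    (e : (B.restrict W₁).IsometryEquiv (B.restrict V₁))
    (he : ∀ x : W₁, (x : E) ∈ rad B W₂ ↔ (e x : E) ∈ rad B V₂) :
    ∃ e' : (B.restrict W₂).IsometryEquiv (B.restrict V₂),
      ∀ x : W₁, (e' (Submodule.inclusion hW x) : E) = e x := by
  obtain ⟨e', he'⟩ := witt_extension (hB.restrict V₂) h₂
    (i := restrictInclusion B hW) (f := (restrictInclusion B hV).comp e.toIsometry)
    (Submodule.inclusion_injective hW)
    ((Submodule.inclusion_injective hV).comp (EquivLike.injective e))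
    fun x => ((coe_mem_rad_iff hB _).symm.trans (he x)).trans (coe_mem_rad_iff hB _)
  exact ⟨e', fun x => congrArg Subtype.val (he' x)⟩

theorem exists_isometryEquiv_map_flag_eq (hB : B.IsSymm) (hker : LinearMap.ker B = ⊥)
    {V₁ V₂ W₁ W₂ : Submodule ℝ E} [FiniteDimensional ℝ V₂] [FiniteDimensional ℝ W₂]
    (hV : V₁ ≤ V₂) (hW : W₁ ≤ W₂)
    (h₁ : (B.restrict W₁).Equivalent (B.restrict V₁))
    (h₂ : (B.restrict W₂).Equivalent (B.restrict V₂))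
    (hdim : finrank ℝ (W₁ ⊓ rad B W₂ : Submodule ℝ E) =
      finrank ℝ (V₁ ⊓ rad B V₂ : Submodule ℝ E)) :
    ∃ g : B.IsometryEquiv B, W₁.map g.toLinearMap = V₁ ∧ W₂.map g.toLinearMap = V₂ := by
  have : FiniteDimensional ℝ V₁ := Submodule.finiteDimensional_of_le hV
  have : FiniteDimensional ℝ W₁ := Submodule.finiteDimensional_of_le hW
  obtain ⟨e₁, he₁⟩ := exists_restrict_isometryEquiv_coe_mem_rad_iff hB hV hW h₁ hdim
  obtain ⟨e₂, he₂⟩ := witt_extension_of_mem_rad_iff hB hV hW h₂ e₁ he₁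
  obtain ⟨g, hg⟩ := witt_extension_of_ker_eq_bot hB hker e₂
  exact ⟨g, map_eq_of_forall_apply_eq e₁.toLinearEquiv fun x =>
      (hg (Submodule.inclusion hW x)).trans (he₂ x),
    map_eq_of_forall_apply_eq e₂.toLinearEquiv hg⟩

theorem flag_orbit_iff_signature_and_radical_general (hB : B.IsSymm) (hnondeg : B.Nondegenerate)
    {V₁ V₂ W₁ W₂ : Submodule ℝ E} [FiniteDimensional ℝ V₂] [FiniteDimensional ℝ W₂]
    (hV : V₁ ≤ V₂) (hW : W₁ ≤ W₂) :
    (∃ g : E ≃ₗ[ℝ] E, (∀ x y, B (g x) (g y) = B x y) ∧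
        V₁ = W₁.map g.toLinearMap ∧ V₂ = W₂.map g.toLinearMap) ↔
      (signat B V₂ = signat B W₂ ∧ signat B V₁ = signat B W₁ ∧
        finrank ℝ (V₁ ⊓ rad B V₂ : Submodule ℝ E) =
          finrank ℝ (W₁ ⊓ rad B W₂ : Submodule ℝ E)) := by
  have : FiniteDimensional ℝ V₁ := Submodule.finiteDimensional_of_le hV
  have : FiniteDimensional ℝ W₁ := Submodule.finiteDimensional_of_le hW
  rw [eq_comm (a := signat B V₂), eq_comm (a := signat B V₁), signat_eq_signat_iff_equivalent hB hB,
    signat_eq_signat_iff_equivalent hB hB]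
  constructor
  · rintro ⟨g, hg, rfl, rfl⟩
    let g' : B.IsometryEquiv B := { g with map_app' := hg }
    refine ⟨⟨restrictIsometryEquiv g' W₂⟩, ⟨restrictIsometryEquiv g' W₁⟩, ?_⟩
    rw [show g.toLinearMap = g'.toLinearMap from rfl, rad_map_isometryEquiv,
      ← Submodule.map_inf _ g.injective]
    exact g.finrank_map_eq _
  · rintro ⟨h₂, h₁, hdim⟩
    obtain ⟨g, hg₁, hg₂⟩ := exists_isometryEquiv_map_flag_eq hB
      (LinearMap.separatingLeft_iff_ker_eq_bot.1 hnondeg.1) hV hW h₁ h₂ hdim.symm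
    exact ⟨g.toLinearEquiv, fun x y => g.map_app y x, hg₁.symm, hg₂.symm⟩

theorem stdForm_isSymm (p q : ℕ) : (stdForm p q).IsSymm where
  eq x y := by
    simp only [stdForm, Matrix.toLinearMap₂'_apply', Matrix.mulVec_diagonal, dotProduct]
    exact Finset.sum_congr rfl fun i _ => by ring

theorem stdForm_nondegenerate (p q : ℕ) : (stdForm p q).Nondegenerate := by
  refine LinearMap.nondegenerate_toLinearMap₂'_of_det_ne_zero' ?_
  rw [Matrix.det_diagonal, Finset.prod_ne_zero_iff]
  intro i _
  split_ifs <;> norm_num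

end Flags

/-- Two flags `(V₁, V₂)` and `(W₁, W₂)` in `F_{k₁,k₂}` lie in the same `O(p,q)`-orbit if and
only if `sign V₂ = sign W₂`, `sign V₁ = sign W₁` and
`dim (V₁ ∩ rad V₂) = dim (W₁ ∩ rad W₂)`. -/
theorem flag_orbit_iff_signature_and_radical (p q k₁ k₂ : ℕ)
    (hp : 1 ≤ p) (hq : 1 ≤ q) (hk₁ : 1 ≤ k₁) (hk₁₂ : k₁ < k₂) (hk₂ : k₂ ≤ p + q)
    (V₁ V₂ W₁ W₂ : Submodule ℝ (Fin (p + q) → ℝ))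
    (hV : V₁ ≤ V₂) (hW : W₁ ≤ W₂)
    (hV₁ : finrank ℝ V₁ = k₁) (hV₂ : finrank ℝ V₂ = k₂)
    (hW₁ : finrank ℝ W₁ = k₁) (hW₂ : finrank ℝ W₂ = k₂) :
    (∃ g : (Fin (p + q) → ℝ) ≃ₗ[ℝ] (Fin (p + q) → ℝ),
        (∀ x y, stdForm p q (g x) (g y) = stdForm p q x y) ∧
          V₁ = W₁.map g.toLinearMap ∧ V₂ = W₂.map g.toLinearMap) ↔
      (signat (stdForm p q) V₂ = signat (stdForm p q) W₂ ∧
        signat (stdForm p q) V₁ = signat (stdForm p q) W₁ ∧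
        finrank ℝ (V₁ ⊓ rad (stdForm p q) V₂ : Submodule ℝ (Fin (p + q) → ℝ)) =
          finrank ℝ (W₁ ⊓ rad (stdForm p q) W₂ : Submodule ℝ (Fin (p + q) → ℝ))) := by
  exact flag_orbit_iff_signature_and_radical_general (stdForm_isSymm p q)
    (stdForm_nondegenerate p q) hV hW
end
end

section
/- Let V be a finite-dimensional real vector space with a symmetric bilinear form ⟨·,·⟩ of signature (p,q,0) (i.e. nondegenerate), and let {w₁, …, w_k} with k ≥ 1 be a (0,0,k)-system, i.e. k linearly independent vectors satisfying ⟨w_i, w_j⟩ = 0 for all i, j. Then there exists a (p,q,0)-basis {x₁, …, x_p, y₁, …, y_q} of V (i.e. a basis with ⟨x_i,x_j⟩ = δ_{ij}, ⟨y_i,y_j⟩ = −δ_{ij}, ⟨x_i,y_j⟩ = 0) such that w_i = x_i + y_i for all i ∈ {1, …, k}. -/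
open Module

noncomputable section

/-!
Nondegeneracy yields vectors dual to the `wᵢ`; correcting them by a combination of the `wᵢ` makes
them isotropic, so that the `wᵢ` and the corrected duals `zᵢ` form hyperbolic pairs. The vectors
`xᵢ = wᵢ / 2 + zᵢ` and `yᵢ = wᵢ / 2 - zᵢ` are then pairwise orthogonal of squares `1` and `-1`, and
`wᵢ = xᵢ + yᵢ`. The form stays nondegenerate on the orthogonal complement of their span, so a
pseudo-orthonormal basis of that complement completes them to a basis of `V`, and Sylvester's law of
inertia shows that this basis has `p` positive and `q` negative vectors.
-/

open LinearMap (BilinForm)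

section Signature

variable {V : Type*} [AddCommGroup V] [Module ℝ V] {B : BilinForm ℝ V}

theorem nondegenerate_of_rad_top_eq_bot (hB : B.IsRefl) (h : rad B ⊤ = ⊥) : B.Nondegenerate := by
  rw [rad, top_inf_eq, BilinForm.orthogonal_top_eq_ker hB] at h
  exact hB.nondegenerate_iff_separatingLeft.2
    (LinearMap.separatingLeft_iff_ker_eq_bot.2 h)

variable [FiniteDimensional ℝ V] (B)

theorem posIdx_top_eq_sigPos : posIdx B ⊤ = sigPos B.toQuadraticMap := by
  rw [← (sigPos_isGreatest B.toQuadraticMap).csSup_eq]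
  simp [posIdx, QuadraticMap.PosDef]

theorem negIdx_top_eq_sigNeg : negIdx B ⊤ = sigNeg B.toQuadraticMap := by
  rw [← (sigNeg_isGreatest B.toQuadraticMap).csSup_eq]
  simp [negIdx, QuadraticMap.PosDef]

end Signature

section HyperbolicPairs

variable {ι : Type*} [DecidableEq ι]

theorem exists_dual_family {K V : Type*} [Field K] [AddCommGroup V] [Module K V]
    [FiniteDimensional K V] {B : BilinForm K V} (hnd : B.Nondegenerate)
    {w : ι → V} (hw : LinearIndependent K w) :
    ∃ u : ι → V, ∀ i j, B (w i) (u j) = if i = j then 1 else 0 := by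
  obtain ⟨coords, hcoords⟩ :=
    (Finsupp.linearCombination K w).exists_leftInverse_of_injective (LinearMap.ker_eq_bot.2 hw)
  have hcoords_w (i : ι) : coords (w i) = Finsupp.single i 1 := by
    simpa using LinearMap.congr_fun hcoords (Finsupp.single i 1)
  refine ⟨fun j => (B.flip.toDual hnd.flip).symm (Finsupp.lapply j ∘ₗ coords), fun i j => ?_⟩
  rw [← BilinForm.flip_apply, BilinForm.apply_toDual_symm_apply, LinearMap.comp_apply, hcoords_w,
    Finsupp.lapply_apply, Finsupp.single_apply]

variable {R M : Type*} [CommRing R] [Invertible (2 : R)] [AddCommGroup M] [Module R M]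
  {B : BilinForm R M} {w : ι → M}

theorem exists_isotropic_dual_family [Finite ι] (hB : B.IsSymm)
    (hnull : ∀ i j, B (w i) (w j) = 0) {u : ι → M}
    (hu : ∀ i j, B (w i) (u j) = if i = j then 1 else 0) :
    ∃ z : ι → M, (∀ i j, B (w i) (z j) = if i = j then 1 else 0) ∧
      ∀ i j, B (z i) (z j) = 0 := by
  cases nonempty_fintype ι
  let c (j : ι) : M := ⅟(2 : R) • ∑ l, B (u j) (u l) • w l
  have hwc (i j : ι) : B (w i) (c j) = 0 := by simp [c, hnull]
  have huw (i j : ι) : B (u i) (w j) = if j = i then 1 else 0 := by rw [hB.eq, hu]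
  have huc (i j : ι) : B (u i) (c j) = ⅟2 * B (u i) (u j) := by
    rw [hB.eq (u i) (u j)]
    simp [c, huw]
  have hcc (i j : ι) : B (c i) (c j) = 0 := by simp [c, hnull]
  refine ⟨fun j => u j - c j, fun i j => by rw [map_sub, hu, hwc, sub_zero], fun i j => ?_⟩
  calc B (u i - c i) (u j - c j)
      = B (u i) (u j) - B (u i) (c j) - B (u j) (c i) + B (c i) (c j) := by
        rw [hB.eq (u j) (c i)]
        simp only [map_sub, LinearMap.sub_apply]
        ring
    _ = (1 - ⅟2 * 2) * B (u i) (u j) := by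
        rw [huc, huc, hcc, hB.eq (u j) (u i)]
        ring
    _ = 0 := by rw [invOf_mul_self, sub_self, zero_mul]

end HyperbolicPairs

section Orthogonal

theorem equivalent_weightedSumSquares_of_iIsOrtho {R M ι : Type*} [CommRing R]
    [Invertible (2 : R)] [AddCommGroup M] [Module R M] [Fintype ι] {B : BilinForm R M}
    (hB : B.IsSymm) {b : Basis ι R M} (hb : B.iIsOrtho b) :
    B.toQuadraticMap.Equivalent (QuadraticMap.weightedSumSquares R fun i => B (b i) (b i)) := by
  have hassoc : QuadraticMap.associated B.toQuadraticMap = B :=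
    QuadraticMap.associated_left_inverse R hB.eq
  have hrepr := QuadraticMap.basisRepr_eq_of_iIsOrtho B.toQuadraticMap b (hassoc.symm ▸ hb)
  exact ⟨hrepr ▸ B.toQuadraticMap.isometryEquivBasisRepr b⟩

variable {K V ι : Type*} [Field K] [AddCommGroup V] [Module K V] [FiniteDimensional K V]
  {B : BilinForm K V}

theorem isCompl_span_orthogonal_of_iIsOrtho (hB : B.IsRefl) {v : ι → V} (hv : B.iIsOrtho v)
    (hself : ∀ i, B (v i) (v i) ≠ 0) :
    IsCompl (Submodule.span K (Set.range v)) (B.orthogonal (Submodule.span K (Set.range v))) := by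
  let b := Basis.span (BilinForm.linearIndependent_of_iIsOrtho hv hself)
  have hb (i : ι) : (b i : V) = v i := congrArg Subtype.val (Basis.span_apply _ i)
  refine BilinForm.isCompl_orthogonal_of_restrict_nondegenerate hB ?_
  refine (BilinForm.iIsOrtho.nondegenerate_iff_not_isOrtho_basis_self _ b ?_).2 fun i => ?_
  · refine BilinForm.iIsOrtho_def.2 fun i j hij => ?_
    simpa [hb] using hv hij
  · simpa [hb] using hself i

theorem nondegenerate_restrict_orthogonal (hB : B.IsRefl) (hnd : B.Nondegenerate)
    {W : Submodule K V} (hW : IsCompl W (B.orthogonal W)) :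
    (B.restrict (B.orthogonal W)).Nondegenerate := by
  rw [BilinForm.restrict_nondegenerate_iff_isCompl_orthogonal hB,
    BilinForm.orthogonal_orthogonal hnd hB]
  exact hW.symm

end Orthogonal

/-- A pseudo-orthonormal family for a bilinear form, in the paper a `(p, q, 0)`-system: pairwise
orthogonal vectors, those indexed by `ι` of square `1` and those indexed by `κ` of square `-1`.
Splitting the index type records the signs. -/
structure IsPseudoOrthonormal {R M ι κ : Type*} [CommRing R] [AddCommGroup M] [Module R M]
    (B : BilinForm R M) (e : ι ⊕ κ → M) : Prop where
  iIsOrtho : B.iIsOrtho e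
  inl_self (i : ι) : B (e (.inl i)) (e (.inl i)) = 1
  inr_self (j : κ) : B (e (.inr j)) (e (.inr j)) = -1

namespace IsPseudoOrthonormal

section CommRing

variable {R M ι κ ι' κ' : Type*} [CommRing R] [AddCommGroup M] [Module R M]
  {B : BilinForm R M} {e : ι ⊕ κ → M} {e' : ι' ⊕ κ' → M}

theorem apply_eq_ite [DecidableEq ι] [DecidableEq κ] (he : IsPseudoOrthonormal B e)
    (i j : ι ⊕ κ) :
    B (e i) (e j) = if i = j then Sum.elim (fun _ => (1 : R)) (fun _ => (-1 : R)) i else 0 := by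
  split_ifs with hij
  · subst hij
    cases i
    · exact he.inl_self _
    · exact he.inr_self _
  · exact he.iIsOrtho hij

theorem apply_self_ne_zero [Nontrivial R] (he : IsPseudoOrthonormal B e) (i : ι ⊕ κ) :
    B (e i) (e i) ≠ 0 := by
  cases i
  · simp [he.inl_self]
  · simp [he.inr_self]

theorem comp_sumMap (he : IsPseudoOrthonormal B e) {f : ι' → ι} {g : κ' → κ}
    (hf : f.Injective) (hg : g.Injective) : IsPseudoOrthonormal B (e ∘ Sum.map f g) where
  iIsOrtho := fun _ _ hij => he.iIsOrtho ((hf.sumMap hg).ne hij)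
  inl_self i := he.inl_self (f i)
  inr_self j := he.inr_self (g j)

theorem sumElim_comp_sumSumSumComm (hB : B.IsRefl) (he : IsPseudoOrthonormal B e)
    (he' : IsPseudoOrthonormal B e') (hee' : ∀ i j, B (e i) (e' j) = 0) :
    IsPseudoOrthonormal B (Sum.elim e e' ∘ Equiv.sumSumSumComm ι ι' κ κ') where
  iIsOrtho := by
    have sumElim_ortho : B.iIsOrtho (Sum.elim e e') := by
      rintro (i | i) (j | j) hij
      · exact he.iIsOrtho fun h => hij (h ▸ rfl)
      · exact hee' i j
      · exact hB _ _ (hee' j i)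
      · exact he'.iIsOrtho fun h => hij (h ▸ rfl)
    exact fun _ _ hij => sumElim_ortho ((Equiv.injective _).ne hij)
  inl_self := Sum.rec he.inl_self he'.inl_self
  inr_self := Sum.rec he.inr_self he'.inr_self

theorem of_isotropic_dual_family [Invertible (2 : R)] [DecidableEq ι] (hB : B.IsSymm)
    {w z : ι → M} (hww : ∀ i j, B (w i) (w j) = 0)
    (hwz : ∀ i j, B (w i) (z j) = if i = j then 1 else 0) (hzz : ∀ i j, B (z i) (z j) = 0) :
    IsPseudoOrthonormal B
      (Sum.elim (fun i => ⅟(2 : R) • w i + z i) (fun i => ⅟(2 : R) • w i - z i)) := by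
  have hzw (i j : ι) : B (z i) (w j) = if j = i then 1 else 0 := by rw [hB.eq, hwz]
  refine ⟨BilinForm.iIsOrtho_def.2 ?_, fun i => ?_, fun i => ?_⟩
  · rintro (i | i) (j | j) hij <;>
      simp only [ne_eq, Sum.inl.injEq, Sum.inr.injEq] at hij <;>
      simp [hww, hwz, hzw, hzz, eq_comm, hij]
  · simp [hww, hwz, hzw, hzz]
  · simp [hww, hwz, hzw, hzz, ← neg_add']

end CommRing

section Real

variable {V ι κ : Type*} [AddCommGroup V] [Module ℝ V] {B : BilinForm ℝ V}

theorem posIdx_top_eq_card [Fintype ι] [Finite κ] (hB : B.IsSymm) {b : Basis (ι ⊕ κ) ℝ V}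
    (hb : IsPseudoOrthonormal B b) : posIdx B ⊤ = Fintype.card ι := by
  cases nonempty_fintype κ
  have := b.finiteDimensional_of_finite
  have setOf_pos : {i | 0 < B (b i) (b i)} = Set.range Sum.inl := by
    ext (i | j) <;> simp [hb.inl_self, hb.inr_self]
  rw [posIdx_top_eq_sigPos, QuadraticForm.sigPos_of_equiv_weightedSumSquares
    (equivalent_weightedSumSquares_of_iIsOrtho hB hb.iIsOrtho), setOf_pos,
    Set.ncard_range_of_injective Sum.inl_injective, Nat.card_eq_fintype_card]

theorem negIdx_top_eq_card [Finite ι] [Fintype κ] (hB : B.IsSymm) {b : Basis (ι ⊕ κ) ℝ V}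
    (hb : IsPseudoOrthonormal B b) : negIdx B ⊤ = Fintype.card κ := by
  cases nonempty_fintype ι
  have := b.finiteDimensional_of_finite
  have setOf_neg : {i | B (b i) (b i) < 0} = Set.range Sum.inr := by
    ext (i | j) <;> simp [hb.inl_self, hb.inr_self]
  rw [negIdx_top_eq_sigNeg, QuadraticForm.sigNeg_of_equiv_weightedSumSquares
    (equivalent_weightedSumSquares_of_iIsOrtho hB hb.iIsOrtho), setOf_neg,
    Set.ncard_range_of_injective Sum.inr_injective, Nat.card_eq_fintype_card]

end Real

end IsPseudoOrthonormal

section Real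

variable {V : Type*} [AddCommGroup V] [Module ℝ V] [FiniteDimensional ℝ V] {B : BilinForm ℝ V}

theorem exists_iIsOrtho_basis_self_eq_one_or_neg_one (hB : B.IsSymm) (hnd : B.Nondegenerate) :
    ∃ b : Basis (Fin (finrank ℝ V)) ℝ V,
      B.iIsOrtho b ∧ ∀ i, B (b i) (b i) = 1 ∨ B (b i) (b i) = -1 := by
  obtain ⟨v, hv⟩ := BilinForm.exists_orthogonal_basis (BilinForm.isSymm_iff.1 hB)
  have hself (i) : B (v i) (v i) ≠ 0 :=
    BilinForm.iIsOrtho.not_isOrtho_basis_self_of_nondegenerate hv hnd i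
  have hsqrt (i) : √|B (v i) (v i)| ≠ 0 := Real.sqrt_ne_zero'.2 (abs_pos.2 (hself i))
  let b := v.unitsSMul fun i => (Units.mk0 _ (hsqrt i))⁻¹
  have hbb (i j) : B (b i) (b j) = B (v i) (v j) / (√|B (v i) (v i)| * √|B (v j) (v j)|) := by
    simp only [b, Basis.unitsSMul_apply, Units.smul_def, Units.val_inv_eq_inv_val, Units.val_mk0,
      map_smul, LinearMap.smul_apply, smul_eq_mul]
    field_simp
  refine ⟨b, BilinForm.iIsOrtho_def.2 fun i j hij => ?_, fun i => ?_⟩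
  · rw [hbb, show B (v i) (v j) = 0 from hv hij, zero_div]
  · rw [hbb, Real.mul_self_sqrt (abs_nonneg _)]
    rcases abs_choice (B (v i) (v i)) with h | h <;> simp [h, hself i]

theorem exists_isPseudoOrthonormal_basis (hB : B.IsSymm) (hnd : B.Nondegenerate) :
    ∃ (m n : ℕ) (b : Basis (Fin m ⊕ Fin n) ℝ V), IsPseudoOrthonormal B b := by
  classical
  obtain ⟨b, hb, hself⟩ := exists_iIsOrtho_basis_self_eq_one_or_neg_one hB hnd
  let pos (i : Fin (finrank ℝ V)) : Prop := B (b i) (b i) = 1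
  let σ := (Equiv.sumCompl pos).symm.trans
    (Equiv.sumCongr (Fintype.equivFin {i // pos i}) (Fintype.equivFin {i // ¬pos i}))
  refine ⟨_, _, b.reindex σ, ?_, fun i => ?_, fun j => ?_⟩
  · rw [Basis.coe_reindex]
    exact fun i j hij => hb (σ.symm.injective.ne hij)
  · rw [Basis.reindex_apply]
    exact ((Fintype.equivFin {i // pos i}).symm i).2
  · rw [Basis.reindex_apply]
    exact (hself _).resolve_left ((Fintype.equivFin {i // ¬pos i}).symm j).2

theorem IsPseudoOrthonormal.exists_basis_extension {ι κ : Type*} {e : ι ⊕ κ → V} (hB : B.IsSymm)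
    (hnd : B.Nondegenerate) (he : IsPseudoOrthonormal B e) :
    ∃ (m n : ℕ) (b : Basis ((ι ⊕ Fin m) ⊕ (κ ⊕ Fin n)) ℝ V),
      IsPseudoOrthonormal B b ∧ ∀ i, b (Sum.map .inl .inl i) = e i := by
  let W := Submodule.span ℝ (Set.range e)
  have hW : IsCompl W (B.orthogonal W) :=
    isCompl_span_orthogonal_of_iIsOrtho hB.isRefl he.iIsOrtho he.apply_self_ne_zero
  let bW : Basis (ι ⊕ κ) ℝ W :=
    Basis.span (BilinForm.linearIndependent_of_iIsOrtho he.iIsOrtho he.apply_self_ne_zero)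
  have hbW (i : ι ⊕ κ) : (bW i : V) = e i := congrArg Subtype.val (Basis.span_apply _ i)
  obtain ⟨m, n, f, hf⟩ := exists_isPseudoOrthonormal_basis (hB.restrict (B.orthogonal W))
    (nondegenerate_restrict_orthogonal hB.isRefl hnd hW)
  have hf' : IsPseudoOrthonormal B fun j => (f j : V) := ⟨hf.iIsOrtho, hf.inl_self, hf.inr_self⟩
  let b := ((bW.prod f).map (W.prodEquivOfIsCompl _ hW)).reindex
    (Equiv.sumSumSumComm ι (Fin m) κ (Fin n)).symm
  have hb : b = Sum.elim e (fun j => (f j : V)) ∘ Equiv.sumSumSumComm ι (Fin m) κ (Fin n) := by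
    ext ((i | i) | (i | i)) <;> simp [b, hbW]
  refine ⟨m, n, b, ?_, fun i => ?_⟩
  · rw [hb]
    refine he.sumElim_comp_sumSumSumComm hB.isRefl hf' fun i j => ?_
    exact (f j).2 (e i) (Submodule.subset_span ⟨i, rfl⟩)
  · rw [hb]
    cases i <;> rfl

theorem exists_isPseudoOrthonormal_basis_of_null_family {ι : Type*} (hB : B.IsSymm)
    (hnd : B.Nondegenerate) {w : ι → V} (hw : LinearIndependent ℝ w)
    (hnull : ∀ i j, B (w i) (w j) = 0) :
    ∃ (m n : ℕ) (b : Basis ((ι ⊕ Fin m) ⊕ (ι ⊕ Fin n)) ℝ V),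
      IsPseudoOrthonormal B b ∧ ∀ i, w i = b (.inl (.inl i)) + b (.inr (.inl i)) := by
  classical
  have : Finite ι := hw.finite
  obtain ⟨u, hwu⟩ := exists_dual_family hnd hw
  obtain ⟨z, hwz, hzz⟩ := exists_isotropic_dual_family hB hnull hwu
  obtain ⟨m, n, b, hb, hb_ext⟩ :=
    (IsPseudoOrthonormal.of_isotropic_dual_family hB hnull hwz hzz).exists_basis_extension hB hnd
  refine ⟨m, n, b, hb, fun i => ?_⟩
  calc w i = (⅟(2 : ℝ) • w i + z i) + (⅟(2 : ℝ) • w i - z i) := by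
        rw [add_add_sub_cancel, ← add_smul, invOf_two_add_invOf_two, one_smul]
    _ = b (.inl (.inl i)) + b (.inr (.inl i)) :=
        congrArg₂ (· + ·) (hb_ext (.inl i)).symm (hb_ext (.inr i)).symm

end Real

/-- If `B` is nondegenerate of signature `(p,q,0)` and `w₁, …, w_k` (`k ≥ 1`) are linearly
independent pairwise-orthogonal null vectors, then there is a `(p,q,0)`-basis
`{x₁, …, x_p, y₁, …, y_q}` of `V` with `wᵢ = xᵢ + yᵢ` for `i ∈ {1, …, k}`. -/
theorem extension_of_null_system {V : Type*} [AddCommGroup V] [Module ℝ V]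
    [FiniteDimensional ℝ V] (B : LinearMap.BilinForm ℝ V) (hB : ∀ x y, B x y = B y x)
    (p q k : ℕ) (hk : 1 ≤ k) (hsig : signat B ⊤ = (p, q, 0))
    (w : Fin k → V) (hw : LinearIndependent ℝ w)
    (hnull : ∀ i j, B (w i) (w j) = 0) :
    ∃ (hkp : k ≤ p) (hkq : k ≤ q) (b : Basis (Fin p ⊕ Fin q) ℝ V),
      (∀ i j, B (b i) (b j) =
        if i = j then Sum.elim (fun _ => (1 : ℝ)) (fun _ => (-1 : ℝ)) i else 0) ∧
      ∀ i : Fin k, w i = b (Sum.inl (Fin.castLE hkp i)) + b (Sum.inr (Fin.castLE hkq i)) := by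
  obtain ⟨hp, hq, hr⟩ : posIdx B ⊤ = p ∧ negIdx B ⊤ = q ∧ finrank ℝ (rad B ⊤) = 0 := by
    simpa only [signat, Prod.mk.injEq] using hsig
  have hsymm : B.IsSymm := ⟨hB⟩
  have hnd := nondegenerate_of_rad_top_eq_bot hsymm.isRefl (Submodule.finrank_eq_zero.1 hr)
  obtain ⟨m, n, b, hb, hwb⟩ := exists_isPseudoOrthonormal_basis_of_null_family hsymm hnd hw hnull
  obtain rfl : p = k + m := by simp [← hp, hb.posIdx_top_eq_card hsymm]
  obtain rfl : q = k + n := by simp [← hq, hb.negIdx_top_eq_card hsymm]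
  let b' := b.reindex (Equiv.sumCongr finSumFinEquiv finSumFinEquiv)
  have hb' : IsPseudoOrthonormal B b' := by
    rw [Basis.coe_reindex]
    exact hb.comp_sumMap finSumFinEquiv.symm.injective finSumFinEquiv.symm.injective
  refine ⟨k.le_add_right m, k.le_add_right n, b', hb'.apply_eq_ite, fun i => ?_⟩
  have hcastLE (l : ℕ) : Fin.castLE (k.le_add_right l) i = finSumFinEquiv (.inl i) := rfl
  simp [b', hcastLE, hwb]
end
end

section
/- Let V be a finite-dimensional real vector space with a symmetric bilinear form ⟨·,·⟩ of signature (p,q,r), and let W be a subspace of V with sign(W) = (s,t,u) and dim(W ∩ rad(V)) = k. Fix an (s,t,u)-basis {x₁, …, x_s, y₁, …, y_t, z₁, …, z_u} of W such that z_{u−k+1}, …, z_u ∈ rad(V). Then V has a (p,q,r)-basis {α₁, …, α_p, β₁, …, β_q, γ₁, …, γ_r} such that x_i = α_i for i ∈ {1,…,s}, y_i = β_i for i ∈ {1,…,t}, z_i = α_{s+i} + β_{t+i} for i ∈ {1,…,u−k}, and z_{u−k+i} = γ_i for i ∈ {1,…,k}. -/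
open Module

noncomputable section

/-!
Let `z i` be the isotropic vectors of the given basis of `W` lying outside the radical of `V`. They
have isotropic partners `w i`, dual to the `z i` and orthogonal to the `x`, the `y` and each other,
so `z i = (½ z i + w i) + (½ z i - w i)` is a sum of orthogonal vectors of square `1` and `-1`.
These vectors together with the `x` and `y` span a nondegenerate subspace `U`, whence
`V = U ⊕ U^⊥`. The given radical vectors lie in `U^⊥`; diagonalising the form on a complement of
their span in `U^⊥` yields a basis of `V` with diagonal Gram matrix and entries `1, -1, 0`. By
Sylvester's law of inertia these entries occur `p`, `q` and `r` times, so it remains to reorder.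
-/

section Equiv

variable {α β δ : Type*} [Finite α] [Finite β] {i : δ → α} {j : δ → β}

theorem exists_equiv_apply_eq_of_card_eq (hcard : Nat.card α = Nat.card β)
    (hi : i.Injective) (hj : j.Injective) : ∃ e : α ≃ β, ∀ d, e (i d) = j d := by
  classical
  obtain ⟨e₀⟩ := Finite.card_eq.1 hcard
  let f : {a // a ∈ Set.range i} ≃ {a // a ∈ Set.range (e₀.symm ∘ j)} :=
    (Equiv.ofInjective i hi).symm.trans (Equiv.ofInjective _ (e₀.symm.injective.comp hj))
  refine ⟨f.extendSubtype.trans e₀, fun d => ?_⟩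
  rw [Equiv.trans_apply, f.extendSubtype_apply_of_mem _ ⟨d, rfl⟩]
  simp [f]

theorem exists_equiv_apply_eq_of_ncard_fiber_eq_s10 {γ : Type*} {f : α → γ} {g : β → γ}
    (hcard : ∀ c, {a | f a = c}.ncard = {b | g b = c}.ncard)
    (hi : i.Injective) (hj : j.Injective) (hij : ∀ d, f (i d) = g (j d)) :
    ∃ e : α ≃ β, (∀ a, g (e a) = f a) ∧ ∀ d, e (i d) = j d := by
  choose E hE using fun c => exists_equiv_apply_eq_of_card_eq (hcard c)
    (i := fun d : {d // f (i d) = c} => ⟨i d, d.2⟩)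
    (j := fun d : {d // f (i d) = c} => ⟨j d, (hij d).symm.trans d.2⟩)
    (fun d d' h => Subtype.ext (hi (congrArg Subtype.val h)))
    (fun d d' h => Subtype.ext (hj (congrArg Subtype.val h)))
  exact ⟨Equiv.ofFiberEquiv E, Equiv.ofFiberEquiv_map E,
    fun d => congrArg Subtype.val (hE (f (i d)) ⟨d, rfl⟩)⟩

end Equiv

section Sign

variable {α β γ : Type*} {σ : SignType}

theorem signType_coe_pos : 0 < (σ : ℝ) ↔ σ = 1 := by
  cases σ <;> simp

theorem signType_coe_lt_zero : (σ : ℝ) < 0 ↔ σ = -1 := by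
  cases σ <;> simp

theorem signType_coe_eq_zero : (σ : ℝ) = 0 ↔ σ = 0 := by
  cases σ <;> simp

/-- The signs `1, …, 1, -1, …, -1, 0, …, 0` that the vectors of an `(s,t,u)`-system are required to
have, in that order, as a labelling of `Fin s ⊕ Fin t ⊕ Fin u`. -/
def tripleSign : α ⊕ β ⊕ γ → SignType :=
  Sum.elim (fun _ => 1) (Sum.elim (fun _ => -1) fun _ => 0)

theorem coe_tripleSign (i : α ⊕ β ⊕ γ) :
    ((tripleSign i : SignType) : ℝ) =
      Sum.elim (fun _ => (1 : ℝ)) (Sum.elim (fun _ => (-1 : ℝ)) fun _ => (0 : ℝ)) i := by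
  rcases i with _ | _ | _ <;> simp [tripleSign]

theorem ncard_tripleSign_eq_one : {i : α ⊕ β ⊕ γ | tripleSign i = 1}.ncard = Nat.card α := by
  have : {i : α ⊕ β ⊕ γ | tripleSign i = 1} = Set.range Sum.inl := by
    ext (_ | _ | _) <;> simp [tripleSign]
  rw [this, Set.ncard_range_of_injective Sum.inl_injective]

theorem ncard_tripleSign_eq_neg_one :
    {i : α ⊕ β ⊕ γ | tripleSign i = -1}.ncard = Nat.card β := by
  have : {i : α ⊕ β ⊕ γ | tripleSign i = -1} = Set.range (Sum.inr ∘ Sum.inl) := by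
    ext (_ | _ | _) <;> simp [tripleSign]
  rw [this, Set.ncard_range_of_injective (Sum.inr_injective.comp Sum.inl_injective)]

theorem ncard_tripleSign_eq_zero : {i : α ⊕ β ⊕ γ | tripleSign i = 0}.ncard = Nat.card γ := by
  have : {i : α ⊕ β ⊕ γ | tripleSign i = 0} = Set.range (Sum.inr ∘ Sum.inr) := by
    ext (_ | _ | _) <;> simp [tripleSign]
  rw [this, Set.ncard_range_of_injective (Sum.inr_injective.comp Sum.inr_injective)]

end Sign

/-- The family `v` is pairwise orthogonal for `B`, with `B (v i) (v i) = ε i`. An `(s,t,u)`-system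
is a linearly independent such family with `ε = tripleSign` on `Fin s ⊕ Fin t ⊕ Fin u`. -/
def HasDiagonalGram {ι K V : Type*} [DecidableEq ι] [CommRing K] [AddCommGroup V] [Module K V]
    (B : LinearMap.BilinForm K V) (v : ι → V) (ε : ι → K) : Prop :=
  ∀ i j, B (v i) (v j) = if i = j then ε i else 0

namespace HasDiagonalGram

section CommRing

variable {ι κ K V : Type*} [DecidableEq ι] [DecidableEq κ] [CommRing K] [AddCommGroup V]
  [Module K V] {B : LinearMap.BilinForm K V} {v : ι → V} {w : κ → V} {ε : ι → K} {δ : κ → K}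

theorem apply_self (h : HasDiagonalGram B v ε) (i : ι) : B (v i) (v i) = ε i := by
  rw [h, if_pos rfl]

theorem apply_of_ne (h : HasDiagonalGram B v ε) {i j : ι} (hij : i ≠ j) : B (v i) (v j) = 0 := by
  rw [h, if_neg hij]

theorem comp (h : HasDiagonalGram B v ε) {f : κ → ι} (hf : f.Injective) :
    HasDiagonalGram B (v ∘ f) (ε ∘ f) := fun i j => by
  simp only [Function.comp_apply, h (f i) (f j), hf.eq_iff]

theorem sumElim (hB : B.IsSymm) (hv : HasDiagonalGram B v ε) (hw : HasDiagonalGram B w δ)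
    (hvw : ∀ i j, B (v i) (w j) = 0) :
    HasDiagonalGram B (Sum.elim v w) (Sum.elim ε δ) := by
  rintro (i | i) (j | j)
  · simpa using hv i j
  · simpa using hvw i j
  · simpa [hB.eq] using hvw j i
  · simpa using hw i j

theorem of_sumElim_left (h : HasDiagonalGram B (Sum.elim v w) (Sum.elim ε δ)) :
    HasDiagonalGram B v ε :=
  h.comp Sum.inl_injective

theorem of_sumElim_right (h : HasDiagonalGram B (Sum.elim v w) (Sum.elim ε δ)) :
    HasDiagonalGram B w δ :=
  h.comp Sum.inr_injective

theorem of_mem_ker (hv : ∀ i, v i ∈ B.ker) : HasDiagonalGram B v 0 := fun i j => by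
  simp [LinearMap.mem_ker.1 (hv i)]

theorem iIsOrtho (h : HasDiagonalGram B v ε) : B.iIsOrtho v :=
  LinearMap.BilinForm.iIsOrtho_def.2 fun _ _ => h.apply_of_ne

end CommRing

section Field

variable {ι K V : Type*} [DecidableEq ι] [Field K] [AddCommGroup V] [Module K V]
  {B : LinearMap.BilinForm K V} {v : ι → V} {ε : ι → K}

theorem linearIndependent (h : HasDiagonalGram B v ε) (hε : ∀ i, ε i ≠ 0) :
    LinearIndependent K v :=
  LinearMap.BilinForm.linearIndependent_of_iIsOrtho h.iIsOrtho fun i => by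
    rw [h.apply_self]; exact hε i

theorem disjoint_span_orthogonal (h : HasDiagonalGram B v ε) (hε : ∀ i, ε i ≠ 0) :
    Disjoint (Submodule.span K (Set.range v)) (B.orthogonal (Submodule.span K (Set.range v))) := by
  rw [Submodule.disjoint_def]
  intro x hx hx'
  obtain ⟨c, rfl⟩ := (Finsupp.mem_span_range_iff_exists_finsupp).1 hx
  refine Finset.sum_eq_zero fun i _ => ?_
  have hi : B (v i) (c.sum fun j a => a • v j) = c i * ε i := by
    simp +contextual [Finsupp.sum, h i]
  have hci : c i * ε i = 0 := hi ▸ hx' (v i) (Submodule.subset_span ⟨i, rfl⟩)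
  simp [(mul_eq_zero.1 hci).resolve_right (hε i)]

theorem isCompl_span_orthogonal [FiniteDimensional K V] (hB : B.IsSymm)
    (h : HasDiagonalGram B v ε) (hε : ∀ i, ε i ≠ 0) :
    IsCompl (Submodule.span K (Set.range v)) (B.orthogonal (Submodule.span K (Set.range v))) :=
  (LinearMap.BilinForm.isCompl_orthogonal_iff_disjoint hB.isRefl).2
    (h.disjoint_span_orthogonal hε)

end Field

end HasDiagonalGram

section DualVectors

variable {ι K V : Type*} [Field K] [AddCommGroup V] [Module K V]

theorem exists_linearMap_apply_eq_of_linearIndependent {W : Type*} [AddCommGroup W] [Module K W]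
    {v : ι → V} (hv : LinearIndependent K v) (c : ι → W) : ∃ f : V →ₗ[K] W, ∀ i, f (v i) = c i := by
  obtain ⟨f, hf⟩ := LinearMap.exists_extend ((Basis.span hv).constr K c)
  refine ⟨f, fun i => ?_⟩
  rw [← (Basis.span hv).constr_basis K c i, ← hf]
  simp [Basis.span_apply]

theorem exists_apply_eq_of_disjoint_ker [FiniteDimensional K V] {B : LinearMap.BilinForm K V}
    {v : ι → V} (hv : LinearIndependent K v)
    (hker : Disjoint (Submodule.span K (Set.range v)) B.ker) (c : ι → K) :
    ∃ w, ∀ i, B (v i) w = c i := by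
  obtain ⟨f, hf⟩ := exists_linearMap_apply_eq_of_linearIndependent (hv.map hker) c
  obtain ⟨w, rfl⟩ := (Module.evalEquiv K V).surjective f
  exact ⟨w, hf⟩

end DualVectors

section Hyperbolic

variable {ι μ K V : Type*} [Field K] [AddCommGroup V] [Module K V] [FiniteDimensional K V]
  [Finite μ] [DecidableEq μ] {B : LinearMap.BilinForm K V} {v : ι → V} {z : μ → V}

theorem exists_isotropic_dual_family_s10 (hB : B.IsSymm) (h2 : (2 : K) ≠ 0)
    (hvz : ∀ i j, B (v i) (z j) = 0) (hz : ∀ i j, B (z i) (z j) = 0)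
    (hli : LinearIndependent K (Sum.elim v z))
    (hker : Disjoint (Submodule.span K (Set.range (Sum.elim v z))) B.ker) :
    ∃ w : μ → V, (∀ i j, B (v i) (w j) = 0) ∧ (∀ i j, B (z i) (w j) = if i = j then 1 else 0) ∧
      ∀ i j, B (w i) (w j) = 0 := by
  have := Fintype.ofFinite μ
  choose w₀ hw₀ using fun j =>
    exists_apply_eq_of_disjoint_ker hli hker (Sum.elim 0 fun i => if i = j then 1 else 0)
  have hvw₀ (i j) : B (v i) (w₀ j) = 0 := hw₀ j (.inl i)
  have hzw₀ (i j) : B (z i) (w₀ j) = if i = j then 1 else 0 := hw₀ j (.inr i)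
  have hw₀z (i j) : B (w₀ i) (z j) = if j = i then 1 else 0 := by rw [hB.eq, hzw₀]
  -- Translating `w₀` along the isotropic `z` keeps all pairings with `v` and `z`.
  refine ⟨fun j => w₀ j - ∑ l, (B (w₀ j) (w₀ l) / 2) • z l,
    fun i j => ?_, fun i j => ?_, fun i j => ?_⟩
  · simp [hvw₀, hvz]
  · simp [hzw₀, hz]
  · calc
      _ = B (w₀ i) (w₀ j) - B (w₀ i) (w₀ j) / 2 - B (w₀ i) (w₀ j) / 2 := by
        simp [hzw₀, hw₀z, hz, hB.eq (w₀ j) (w₀ i)]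
      _ = 0 := by field_simp; ring

theorem exists_hyperbolic_splitting [DecidableEq ι] {ε : ι → K} (hB : B.IsSymm) (h2 : (2 : K) ≠ 0)
    (h : HasDiagonalGram B (Sum.elim v z) (Sum.elim ε 0))
    (hli : LinearIndependent K (Sum.elim v z))
    (hker : Disjoint (Submodule.span K (Set.range (Sum.elim v z))) B.ker) :
    ∃ a b : μ → V, z = a + b ∧
      HasDiagonalGram B (Sum.elim v (Sum.elim a b)) (Sum.elim ε (Sum.elim 1 (-1))) := by
  have hvz (i j) : B (v i) (z j) = 0 := h.apply_of_ne (i := .inl i) (j := .inr j) Sum.inl_ne_inr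
  have hz (i j) : B (z i) (z j) = 0 := by simpa using h.of_sumElim_right i j
  obtain ⟨w, hvw, hzw, hw⟩ := exists_isotropic_dual_family_s10 hB h2 hvz hz hli hker
  have hwz (i j) : B (w i) (z j) = if i = j then 1 else 0 := by
    rw [hB.eq, hzw]; simp only [eq_comm]
  have half : (2⁻¹ + 2⁻¹ : K) = 1 := by rw [← two_mul, mul_inv_cancel₀ h2]
  refine ⟨fun j => (2⁻¹ : K) • z j + w j, fun j => (2⁻¹ : K) • z j - w j, ?_,
    h.of_sumElim_left.sumElim hB (.sumElim hB ?_ ?_ ?_) ?_⟩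
  · ext j
    simp only [Pi.add_apply, add_add_sub_cancel, ← add_smul, half, one_smul]
  · intro i j
    rcases eq_or_ne i j with rfl | hij
    · simp [hz, hzw, hwz, hw, half]
    · simp [hz, hzw, hwz, hw, hij]
  · intro i j
    rcases eq_or_ne i j with rfl | hij
    · simp [hz, hzw, hwz, hw, ← neg_add', half]
    · simp [hz, hzw, hwz, hw, hij]
  · intro i j
    simp [hz, hzw, hwz, hw]
  · rintro i (j | j) <;> simp [hvz, hvw]

end Hyperbolic

section SignedBasis

theorem exists_basis_coe_eq_sumElim_of_isCompl_span {ι κ K V : Type*} [Field K] [AddCommGroup V]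
    [Module K V] {v : ι → V} (hv : LinearIndependent K v) {W : Submodule K V}
    (h : IsCompl (Submodule.span K (Set.range v)) W) (c : Basis κ K W) :
    ∃ b : Basis (ι ⊕ κ) K V, ⇑b = Sum.elim v fun j => (c j : V) :=
  ⟨((Basis.span hv).prod c).map (Submodule.prodEquivOfIsCompl _ _ h), by
    ext (i | j) <;> simp [Basis.span_apply]⟩

theorem exists_basis_hasDiagonalGram_of_equivalent {ι K V : Type*} [Fintype ι] [DecidableEq ι]
    [Field K] [AddCommGroup V] [Module K V] {B : LinearMap.BilinForm K V} (hB : B.IsSymm)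
    (h2 : (2 : K) ≠ 0) {w : ι → K}
    (h : B.toQuadraticMap.Equivalent (QuadraticMap.weightedSumSquares K w)) :
    ∃ b : Basis ι K V, HasDiagonalGram B b w := by
  obtain ⟨e⟩ := h
  let b : Basis ι K V := .ofEquivFun e.toLinearEquiv
  have hQ (x : V) : B x x = ∑ l, w l * (b.repr x l * b.repr x l) := by
    refine (e.map_app x).symm.trans ?_
    rw [QuadraticMap.weightedSumSquares_apply]
    rfl
  refine ⟨b, fun i j => mul_left_cancel₀ h2 ?_⟩
  calc 2 * B (b i) (b j)
    _ = B (b i + b j) (b i + b j) - B (b i) (b i) - B (b j) (b j) := by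
      simp only [map_add, LinearMap.add_apply, hB.eq (b j) (b i)]
      ring
    _ = 2 * ∑ l, w l * (b.repr (b i) l * b.repr (b j) l) := by
      rw [hQ, hQ, hQ, ← Finset.sum_sub_distrib, ← Finset.sum_sub_distrib, Finset.mul_sum]
      simp only [map_add, Finsupp.add_apply]
      exact Finset.sum_congr rfl fun l _ => by ring
    _ = 2 * if i = j then w i else 0 := by
      rw [Finset.sum_eq_single i (by simp +contextual) (by simp)]
      simp [Finsupp.single_apply, eq_comm]

theorem exists_basis_hasDiagonalGram_signType {V : Type*} [AddCommGroup V] [Module ℝ V]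
    [FiniteDimensional ℝ V] {B : LinearMap.BilinForm ℝ V} (hB : B.IsSymm) :
    ∃ (ε : Fin (finrank ℝ V) → SignType) (b : Basis (Fin (finrank ℝ V)) ℝ V),
      HasDiagonalGram B b fun i => (ε i : ℝ) := by
  obtain ⟨ε, hε⟩ :=
    QuadraticForm.equivalent_signType_weighted_sum_squared B.toQuadraticMap
  exact ⟨ε, exists_basis_hasDiagonalGram_of_equivalent hB two_ne_zero hε⟩

theorem exists_basis_hasDiagonalGram_extending_ker {κ V : Type*} [DecidableEq κ]
    [AddCommGroup V] [Module ℝ V] [FiniteDimensional ℝ V] {B : LinearMap.BilinForm ℝ V}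
    (hB : B.IsSymm) {g : κ → V} (hg : LinearIndependent ℝ g) (hgB : ∀ i, g i ∈ B.ker) :
    ∃ (n : ℕ) (ε : Fin n → SignType) (b : Basis (κ ⊕ Fin n) ℝ V),
      HasDiagonalGram B b (Sum.elim 0 fun i => (ε i : ℝ)) ∧ ∀ i, b (.inl i) = g i := by
  obtain ⟨C, hC⟩ := (Submodule.span ℝ (Set.range g)).exists_isCompl
  obtain ⟨ε, c, hc⟩ := exists_basis_hasDiagonalGram_signType (hB.restrict C)
  obtain ⟨b, hb⟩ := exists_basis_coe_eq_sumElim_of_isCompl_span hg hC c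
  refine ⟨_, ε, b, ?_, fun i => by rw [hb, Sum.elim_inl]⟩
  rw [hb]
  exact .sumElim hB (.of_mem_ker hgB) hc fun i j => by simp [LinearMap.mem_ker.1 (hgB i)]

theorem HasDiagonalGram.exists_basis_extending {ι κ V : Type*} [DecidableEq ι] [DecidableEq κ]
    [AddCommGroup V] [Module ℝ V] [FiniteDimensional ℝ V] {B : LinearMap.BilinForm ℝ V}
    (hB : B.IsSymm) {e : ι → V} {ε : ι → SignType}
    (he : HasDiagonalGram B e fun i => (ε i : ℝ)) (hε : ∀ i, ε i ≠ 0)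
    {g : κ → V} (hg : LinearIndependent ℝ g) (hgB : ∀ i, g i ∈ B.ker) :
    ∃ (n : ℕ) (δ : Fin n → SignType) (b : Basis (ι ⊕ κ ⊕ Fin n) ℝ V),
      HasDiagonalGram B b (fun i => ((Sum.elim ε (Sum.elim 0 δ) i : SignType) : ℝ)) ∧
        (∀ i, b (.inl i) = e i) ∧ ∀ i, b (.inr (.inl i)) = g i := by
  replace hε (i) : (ε i : ℝ) ≠ 0 := signType_coe_eq_zero.not.2 (hε i)
  let U := Submodule.span ℝ (Set.range e)
  have hUU : IsCompl U (B.orthogonal U) := he.isCompl_span_orthogonal hB hε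
  have hgU (i) : g i ∈ B.orthogonal U := fun x _ => by
    rw [hB.eq, LinearMap.mem_ker.1 (hgB i), LinearMap.zero_apply]
  have hg' : LinearIndependent ℝ fun i => (⟨g i, hgU i⟩ : B.orthogonal U) :=
    .of_comp (B.orthogonal U).subtype hg
  obtain ⟨n, δ, c, hc, hcg⟩ := exists_basis_hasDiagonalGram_extending_ker
    (hB.restrict (B.orthogonal U)) hg' fun i => by
      ext x
      simp [LinearMap.mem_ker.1 (hgB i)]
  obtain ⟨b, hb⟩ := exists_basis_coe_eq_sumElim_of_isCompl_span (he.linearIndependent hε) hUU c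
  refine ⟨n, δ, b, ?_, fun i => by simp [hb], fun i => by simp [hb, hcg]⟩
  have hsign : (fun i : ι ⊕ κ ⊕ Fin n => ((Sum.elim ε (Sum.elim 0 δ) i : SignType) : ℝ)) =
      Sum.elim (fun i => (ε i : ℝ)) (Sum.elim 0 fun i => (δ i : ℝ)) := by
    ext (_ | _ | _) <;> simp
  rw [hb, hsign]
  exact he.sumElim hB hc fun i j => (c j).2 _ (Submodule.subset_span ⟨i, rfl⟩)

end SignedBasis

section Signature

theorem HasDiagonalGram.equivalent_weightedSumSquares {ι K V : Type*} [Fintype ι] [DecidableEq ι]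
    [Field K] [Invertible (2 : K)] [AddCommGroup V] [Module K V] {B : LinearMap.BilinForm K V}
    (hB : B.IsSymm) {w : ι → K} {b : Basis ι K V} (h : HasDiagonalGram B b w) :
    B.toQuadraticMap.Equivalent (QuadraticMap.weightedSumSquares K w) := by
  have hortho : (QuadraticMap.associated (R := K) B.toQuadraticMap).IsOrthoᵢ b := by
    rw [QuadraticMap.associated_left_inverse K hB.eq]
    exact h.iIsOrtho
  have hw : (fun i => B.toQuadraticMap (b i)) = w := funext h.apply_self
  rw [← hw, ← QuadraticMap.basisRepr_eq_of_iIsOrtho _ b hortho]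
  exact ⟨QuadraticMap.isometryEquivBasisRepr _ b⟩

variable {V : Type*} [AddCommGroup V] [Module ℝ V] {B : LinearMap.BilinForm ℝ V}

theorem rad_top (hB : B.IsSymm) : rad B ⊤ = B.ker := by
  rw [rad, top_inf_eq, LinearMap.BilinForm.orthogonal_top_eq_ker hB.isRefl]

theorem inf_rad_top_le_rad (B : LinearMap.BilinForm ℝ V) (W : Submodule ℝ V) :
    W ⊓ rad B ⊤ ≤ rad B W :=
  inf_le_inf_left W (inf_le_right.trans (LinearMap.BilinForm.orthogonal_le le_top))

theorem posIdx_top (B : LinearMap.BilinForm ℝ V) [FiniteDimensional ℝ V] :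
    posIdx B ⊤ = sigPos B.toQuadraticMap := by
  rw [posIdx, ← (sigPos_isGreatest B.toQuadraticMap).csSup_eq]
  simp [QuadraticMap.PosDef]

theorem negIdx_top (B : LinearMap.BilinForm ℝ V) [FiniteDimensional ℝ V] :
    negIdx B ⊤ = sigNeg B.toQuadraticMap := by
  rw [negIdx, ← (sigNeg_isGreatest B.toQuadraticMap).csSup_eq]
  simp [QuadraticMap.PosDef]

theorem HasDiagonalGram.signat_top {ι : Type*} [Finite ι] [DecidableEq ι] (hB : B.IsSymm)
    {b : Basis ι ℝ V} {ε : ι → SignType} (h : HasDiagonalGram B b fun i => (ε i : ℝ)) :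
    signat B ⊤ = ({i | ε i = 1}.ncard, {i | ε i = -1}.ncard, {i | ε i = 0}.ncard) := by
  have := Fintype.ofFinite ι
  have := Module.Finite.of_basis b
  have hQ := h.equivalent_weightedSumSquares hB
  have hpos : posIdx B ⊤ = {i | 0 < (ε i : ℝ)}.ncard := by
    rw [posIdx_top, QuadraticForm.sigPos_of_equiv_weightedSumSquares hQ]
  have hneg : negIdx B ⊤ = {i | (ε i : ℝ) < 0}.ncard := by
    rw [negIdx_top, QuadraticForm.sigNeg_of_equiv_weightedSumSquares hQ]
  have hrad : finrank ℝ (rad B ⊤) = {i | (ε i : ℝ) = 0}.ncard := by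
    rw [rad_top hB, ← QuadraticForm.finrank_radical_of_equiv_weightedSumSquares hQ,
      QuadraticMap.radical_eq_ker_associated, QuadraticMap.associated_left_inverse ℝ hB.eq]
  simp only [signat, hpos, hneg, hrad, signType_coe_pos, signType_coe_lt_zero,
    signType_coe_eq_zero]

end Signature

section Extension

theorem disjoint_span_of_finrank_span_inf_eq {ι κ K V : Type*} [Fintype κ] [Field K]
    [AddCommGroup V] [Module K V] [FiniteDimensional K V] {R : Submodule K V}
    {v : ι → V} {g : κ → V} (hli : LinearIndependent K (Sum.elim v g)) (hg : ∀ i, g i ∈ R)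
    (hdim : finrank K (Submodule.span K (Set.range (Sum.elim v g)) ⊓ R : Submodule K V) =
      Fintype.card κ) :
    Disjoint (Submodule.span K (Set.range v)) R := by
  obtain ⟨-, hg_li, hdisj⟩ := linearIndependent_sum.1 hli
  rw [Sum.elim_comp_inl, Sum.elim_comp_inr] at hdisj
  rw [Set.Sum.elim_range, Submodule.span_union] at hdim
  have hspan : Submodule.span K (Set.range g) =
      (Submodule.span K (Set.range v) ⊔ Submodule.span K (Set.range g)) ⊓ R := by
    refine Submodule.eq_of_le_of_finrank_eq (le_inf le_sup_right ?_) ?_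
    · exact Submodule.span_le.2 (Set.range_subset_iff.2 hg)
    · rw [hdim]
      exact finrank_span_eq_card hg_li
  refine Submodule.disjoint_def.2 fun x hx hxR => Submodule.disjoint_def.1 hdisj x hx ?_
  rw [hspan]
  exact ⟨Submodule.mem_sup_left hx, hxR⟩

variable {V : Type*} [AddCommGroup V] [Module ℝ V] {B : LinearMap.BilinForm ℝ V}

theorem HasDiagonalGram.exists_basis_tripleSign_extending {ι : Type*} [Finite ι] [DecidableEq ι]
    (hB : B.IsSymm) {v : Basis ι ℝ V} {ε : ι → SignType}
    (h : HasDiagonalGram B v fun i => (ε i : ℝ)) {p q r : ℕ} (hsig : signat B ⊤ = (p, q, r))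
    {a b c : ℕ} {φ : Fin a ⊕ Fin b ⊕ Fin c → ι} (hφ : φ.Injective)
    (hεφ : ∀ i, ε (φ i) = tripleSign i) :
    ∃ (ha : a ≤ p) (hb : b ≤ q) (hc : c ≤ r) (v' : Basis (Fin p ⊕ Fin q ⊕ Fin r) ℝ V),
      HasDiagonalGram B v' (fun i => (tripleSign i : ℝ)) ∧
        ∀ i, v' (Sum.map (Fin.castLE ha) (Sum.map (Fin.castLE hb) (Fin.castLE hc)) i) =
          v (φ i) := by
  obtain ⟨hp, hq, hr⟩ : {i | ε i = 1}.ncard = p ∧ {i | ε i = -1}.ncard = q ∧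
      {i | ε i = 0}.ncard = r := by
    simpa only [h.signat_top hB, Prod.mk.injEq] using hsig
  have hle (σ) : {i : Fin a ⊕ Fin b ⊕ Fin c | tripleSign i = σ}.ncard ≤ {i | ε i = σ}.ncard :=
    Set.ncard_le_ncard_of_injOn φ (fun i hi => (hεφ i).trans hi) hφ.injOn
  have ha : a ≤ p := by simpa [ncard_tripleSign_eq_one, hp] using hle 1
  have hb : b ≤ q := by simpa [ncard_tripleSign_eq_neg_one, hq] using hle (-1)
  have hc : c ≤ r := by simpa [ncard_tripleSign_eq_zero, hr] using hle 0
  have hcard (σ) :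
      {i | ε i = σ}.ncard = {i : Fin p ⊕ Fin q ⊕ Fin r | tripleSign i = σ}.ncard := by
    cases σ
    · simpa [ncard_tripleSign_eq_zero] using hr
    · simpa [ncard_tripleSign_eq_neg_one] using hq
    · simpa [ncard_tripleSign_eq_one] using hp
  obtain ⟨e, he, heφ⟩ := exists_equiv_apply_eq_of_ncard_fiber_eq_s10 hcard hφ
    (j := Sum.map (Fin.castLE ha) (Sum.map (Fin.castLE hb) (Fin.castLE hc)))
    ((Fin.castLE_injective ha).sumMap
      ((Fin.castLE_injective hb).sumMap (Fin.castLE_injective hc)))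
    (fun i => by rw [hεφ]; rcases i with _ | _ | _ <;> rfl)
  refine ⟨ha, hb, hc, v.reindex e, ?_, fun i => by simp [← heφ]⟩
  convert h.comp e.symm.injective using 1
  · ext i
    simp
  · ext i
    simp [← he]

theorem exists_basis_tripleSign_of_isotropic_splitting [FiniteDimensional ℝ V] (hB : B.IsSymm)
    {p q r s t m k : ℕ} (hsig : signat B ⊤ = (p, q, r))
    {x : Fin s → V} {y : Fin t → V} {z : Fin m → V} {c : Fin k → V}
    (hgram : HasDiagonalGram B (Sum.elim (Sum.elim x y) z) (Sum.elim (Sum.elim 1 (-1)) 0))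
    (hli : LinearIndependent ℝ (Sum.elim (Sum.elim (Sum.elim x y) z) c))
    (hker : Disjoint (Submodule.span ℝ (Set.range (Sum.elim (Sum.elim x y) z))) B.ker)
    (hcB : ∀ i, c i ∈ B.ker) :
    ∃ (hp : s + m ≤ p) (hq : t + m ≤ q) (hr : k ≤ r) (b : Basis (Fin p ⊕ Fin q ⊕ Fin r) ℝ V),
      HasDiagonalGram B b (fun i => (tripleSign i : ℝ)) ∧
      (∀ i, b (.inl (Fin.castLE hp (Fin.castAdd m i))) = x i) ∧
      (∀ i, b (.inr (.inl (Fin.castLE hq (Fin.castAdd m i)))) = y i) ∧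
      (∀ i, z i = b (.inl (Fin.castLE hp (Fin.natAdd s i))) +
        b (.inr (.inl (Fin.castLE hq (Fin.natAdd t i))))) ∧
      ∀ i, c i = b (.inr (.inr (Fin.castLE hr i))) := by
  obtain ⟨z₁, z₂, rfl, hsplit⟩ := exists_hyperbolic_splitting hB two_ne_zero hgram
    (hli.comp _ Sum.inl_injective) hker
  let ε : (Fin s ⊕ Fin t) ⊕ (Fin m ⊕ Fin m) → SignType :=
    Sum.elim (Sum.elim 1 (-1)) (Sum.elim 1 (-1))
  have hε : (Sum.elim (Sum.elim 1 (-1)) (Sum.elim 1 (-1)) :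
      (Fin s ⊕ Fin t) ⊕ (Fin m ⊕ Fin m) → ℝ) = fun i => (ε i : ℝ) := by
    ext ((_ | _) | (_ | _)) <;> simp [ε]
  obtain ⟨n, δ, v, hv, hve, hvc⟩ := HasDiagonalGram.exists_basis_extending hB (hε ▸ hsplit)
    (by rintro ((_ | _) | (_ | _)) <;> simp [ε])
    (hli.comp _ Sum.inr_injective) hcB
  let E : ((Fin s ⊕ Fin t) ⊕ (Fin m ⊕ Fin m)) ⊕ Fin k ≃ Fin (s + m) ⊕ Fin (t + m) ⊕ Fin k :=
    ((Equiv.sumSumSumComm ..).sumCongr (.refl _)).trans ((Equiv.sumAssoc ..).trans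
      (finSumFinEquiv.sumCongr (finSumFinEquiv.sumCongr (.refl _))))
  obtain ⟨hp, hq, hr, b, hb, hbE⟩ := hv.exists_basis_tripleSign_extending hB hsig
    (φ := Sum.map id Sum.inl ∘ E.symm)
    ((Function.injective_id.sumMap Sum.inl_injective).comp E.symm.injective) (by
      refine E.forall_congr_right.1 fun d => ?_
      rw [Function.comp_apply, E.symm_apply_apply]
      rcases d with ((_ | _) | (_ | _)) | _ <;> rfl)
  replace hbE d := (hbE (E d)).trans
    (congrArg (v ∘ Sum.map id Sum.inl) (E.symm_apply_apply d))
  have hx i := (hbE (.inl (.inl (.inl i)))).trans (hve _)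
  have hy i := (hbE (.inl (.inl (.inr i)))).trans (hve _)
  have hz₁ i := (hbE (.inl (.inr (.inl i)))).trans (hve _)
  have hz₂ i := (hbE (.inl (.inr (.inr i)))).trans (hve _)
  have hc' i := (hbE (.inr i)).trans (hvc _)
  exact ⟨hp, hq, hr, b, hb, hx, hy, fun i => congrArg₂ _ (hz₁ i).symm (hz₂ i).symm,
    fun i => (hc' i).symm⟩

end Extension

/-- An `(s,t,u)`-basis `{x₁,…,x_s, y₁,…,y_t, z₁,…,z_u}` of a subspace `W` of `V` with
`z_{u-k+1}, …, z_u ∈ rad V` (where `k = dim (W ∩ rad V)`) extends to a `(p,q,r)`-basis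
`{α₁,…,α_p, β₁,…,β_q, γ₁,…,γ_r}` of `V` with `xᵢ = αᵢ`, `yᵢ = βᵢ`, `zᵢ = α_{s+i} + β_{t+i}`
for `i ≤ u-k`, and `z_{u-k+i} = γᵢ` for `i ≤ k`. -/
theorem extension_of_stu_basis {V : Type*} [AddCommGroup V] [Module ℝ V]
    [FiniteDimensional ℝ V] (B : LinearMap.BilinForm ℝ V) (hB : ∀ x y, B x y = B y x)
    (p q r s t u k : ℕ) (W : Submodule ℝ V)
    (hsigV : signat B ⊤ = (p, q, r)) (hsigW : signat B W = (s, t, u))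
    (hk : finrank ℝ (W ⊓ rad B ⊤ : Submodule ℝ V) = k)
    (x : Fin s → V) (y : Fin t → V) (z : Fin u → V)
    (hli : LinearIndependent ℝ (Sum.elim x (Sum.elim y z)))
    (hspan : Submodule.span ℝ (Set.range (Sum.elim x (Sum.elim y z))) = W)
    (hform : ∀ i j, B (Sum.elim x (Sum.elim y z) i) (Sum.elim x (Sum.elim y z) j) =
      if i = j then
        Sum.elim (fun _ => (1 : ℝ)) (Sum.elim (fun _ => (-1 : ℝ)) fun _ => (0 : ℝ)) i
      else 0)
    (hzrad : ∀ i : Fin u, u - k ≤ (i : ℕ) → z i ∈ rad B ⊤) :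
    ∃ (hsp : s + (u - k) ≤ p) (htq : t + (u - k) ≤ q) (hkr : k ≤ r)
      (b : Basis (Fin p ⊕ Fin q ⊕ Fin r) ℝ V),
      (∀ i j, B (b i) (b j) =
        if i = j then
          Sum.elim (fun _ => (1 : ℝ)) (Sum.elim (fun _ => (-1 : ℝ)) fun _ => (0 : ℝ)) i
        else 0) ∧
      (∀ i : Fin s, b (Sum.inl (Fin.castLE (by omega) i)) = x i) ∧
      (∀ i : Fin t, b (Sum.inr (Sum.inl (Fin.castLE (by omega) i))) = y i) ∧
      (∀ i : Fin (u - k), z (Fin.castLE (Nat.sub_le u k) i) =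
        b (Sum.inl ⟨s + (i : ℕ), by have := i.isLt; omega⟩) +
          b (Sum.inr (Sum.inl ⟨t + (i : ℕ), by have := i.isLt; omega⟩))) ∧
      (∀ i : Fin k, ∀ h : u - k + (i : ℕ) < u,
        z ⟨u - k + (i : ℕ), h⟩ = b (Sum.inr (Sum.inr (Fin.castLE hkr i)))) := by
  have hBsymm : B.IsSymm := ⟨hB⟩
  have hku : k ≤ u := calc
    k = finrank ℝ (W ⊓ rad B ⊤ : Submodule ℝ V) := hk.symm
    _ ≤ finrank ℝ (rad B W) := Submodule.finrank_mono (inf_rad_top_le_rad B W)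
    _ = u := congrArg (fun n => n.2.2) hsigW
  rw [rad_top hBsymm] at hk hzrad
  let f : Fin (u - k) ⊕ Fin k ≃ Fin u := finSumFinEquiv.trans (finCongr (Nat.sub_add_cancel hku))
  let σ : ((Fin s ⊕ Fin t) ⊕ Fin (u - k)) ⊕ Fin k ≃ Fin s ⊕ Fin t ⊕ Fin u :=
    (Equiv.sumAssoc ..).trans (((Equiv.refl _).sumCongr f).trans (Equiv.sumAssoc ..))
  have hσ : Sum.elim x (Sum.elim y z) ∘ σ =
      Sum.elim (Sum.elim (Sum.elim x y) (z ∘ f ∘ Sum.inl)) (z ∘ f ∘ Sum.inr) := by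
    ext (((_ | _) | _) | _) <;> rfl
  have hliσ := hσ ▸ hli.comp σ σ.injective
  have hspanσ := hspan
  rw [← σ.surjective.range_comp, hσ] at hspanσ
  have hgram : HasDiagonalGram B (Sum.elim (Sum.elim x y) (z ∘ f ∘ Sum.inl))
      (Sum.elim (Sum.elim 1 (-1)) 0) := by
    convert HasDiagonalGram.comp hform (σ.injective.comp Sum.inl_injective) using 1 <;>
      ext ((_ | _) | _) <;> rfl
  have hzkB (i) : (z ∘ f ∘ Sum.inr) i ∈ B.ker := hzrad _ (Nat.le_add_right _ _)
  obtain ⟨hp, hq, hr, b, hb, hx, hy, hz, hzk⟩ := exists_basis_tripleSign_of_isotropic_splitting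
    hBsymm hsigV hgram hliσ
    (disjoint_span_of_finrank_span_inf_eq hliσ hzkB (by rw [hspanσ, hk, Fintype.card_fin])) hzkB
  simp only [HasDiagonalGram, coe_tripleSign] at hb
  exact ⟨hp, hq, hr, b, hb, hx, hy, hz, fun i _ => hzk i⟩
end
end

section
/- Let V be a finite-dimensional real vector space with a nondegenerate symmetric bilinear form ⟨·,·⟩, and let W₁ and W₂ be subspaces of V with sign(W₁) = sign(W₂). Then every linear isometry f : W₁ → W₂ (i.e. a linear bijection satisfying ⟨f(x),f(y)⟩ = ⟨x,y⟩ for all x,y ∈ W₁) extends to a linear isometry f̃ : V → V with f̃|_{W₁} = f. -/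
open Module

noncomputable section

/-!
Witt's extension theorem. If the form is nondegenerate on `W`, an orthogonal basis of `W` is carried
onto its image one vector at a time: for anisotropic vectors of equal norm, a product of at most two
reflections moves one to the other and fixes everything orthogonal to both. Otherwise pick `r ≠ 0`
in the radical of `W` and `v` with `B r v ≠ 0`. The isometry extends to `W ⊔ K ∙ v`, whose radical
is strictly smaller, so induction on the dimension of the radical reduces to the first case.
-/

section WittExtension

open LinearMap LinearMap.BilinForm

variable {K V V' : Type*} [Field K] [AddCommGroup V] [Module K V] [AddCommGroup V'] [Module K V']
  {B : LinearMap.BilinForm K V} {B' : LinearMap.BilinForm K V'}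

lemma isReflective_of_apply_self_ne_zero {a : V} (ha : B a a ≠ 0) : B.IsReflective a where
  regular := .of_ne_zero ha
  dvd_two_mul _ := (isUnit_iff_ne_zero.mpr ha).dvd

/-- The reflection of a symmetric bilinear space in the hyperplane orthogonal to an anisotropic
vector `a`, as an isometric equivalence. -/
def anisotropicReflection (hB : B.IsSymm) {a : V} (ha : B a a ≠ 0) : B.IsometryEquiv B where
  __ := Module.reflection (isReflective_of_apply_self_ne_zero ha).coroot_apply_self
  map_app' := (isReflective_of_apply_self_ne_zero ha).isOrthogonal_reflection B (isSymm_iff.mp hB)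

lemma anisotropicReflection_apply (hB : B.IsSymm) {a : V} (ha : B a a ≠ 0) (x : V) :
    anisotropicReflection hB ha x = x - (2 * B a x / B a a) • a := by
  have hcoroot : (isReflective_of_apply_self_ne_zero ha).coroot B x = 2 * B a x / B a a :=
    eq_div_of_mul_eq ha <| by rw [mul_comm, IsReflective.apply_self_mul_coroot_apply]
  rw [← hcoroot]
  exact Module.reflection_apply x (isReflective_of_apply_self_ne_zero ha).coroot_apply_self

lemma anisotropicReflection_apply_of_isOrtho (hB : B.IsSymm) {a x : V} (ha : B a a ≠ 0)
    (hax : B a x = 0) : anisotropicReflection hB ha x = x := by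
  simp [anisotropicReflection_apply, hax]

lemma anisotropicReflection_apply_self (hB : B.IsSymm) {a : V} (ha : B a a ≠ 0) :
    anisotropicReflection hB ha a = -a := by
  rw [anisotropicReflection_apply, mul_div_cancel_right₀ _ ha]
  module

lemma anisotropicReflection_sub_apply (hB : B.IsSymm) {x y : V} (hxy : B y y = B x x)
    (h : B (x - y) (x - y) ≠ 0) : anisotropicReflection hB h x = y := by
  have hcoeff : 2 * B (x - y) x / B (x - y) (x - y) = 1 := by
    rw [div_eq_one_iff_eq h]
    simp only [map_sub, LinearMap.sub_apply, hB.eq y x, hxy]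
    ring
  rw [anisotropicReflection_apply, hcoeff, one_smul, sub_sub_cancel]

lemma apply_add_self_ne_zero_of_apply_sub_self_eq_zero [NeZero (2 : K)] {x y : V}
    (hx : B x x ≠ 0) (hxy : B y y = B x x) (h : B (x - y) (x - y) = 0) :
    B (x + y) (x + y) ≠ 0 := by
  have parallelogram : B (x + y) (x + y) = 2 * 2 * B x x := by
    simp only [map_sub, map_add, LinearMap.sub_apply, LinearMap.add_apply, hxy] at h ⊢
    linear_combination -h
  rw [parallelogram]
  exact mul_ne_zero (mul_ne_zero two_ne_zero two_ne_zero) hx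

lemma exists_isometryEquiv_apply_eq_of_anisotropic [NeZero (2 : K)] (hB : B.IsSymm) {x y : V}
    (hx : B x x ≠ 0) (hxy : B y y = B x x) :
    ∃ R : B.IsometryEquiv B, R x = y ∧ ∀ z, B x z = 0 → B y z = 0 → R z = z := by
  by_cases hsub : B (x - y) (x - y) = 0
  · -- The reflection in `x + y = x - (-y)` sends `x` to `-y`, which the reflection in `y` sends
    -- to `y`.
    have hadd : B (x - -y) (x - -y) ≠ 0 := by
      rw [sub_neg_eq_add]
      exact apply_add_self_ne_zero_of_apply_sub_self_eq_zero hx hxy hsub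
    have hy : B y y ≠ 0 := hxy ▸ hx
    refine ⟨(anisotropicReflection hB hadd).trans (anisotropicReflection hB hy), ?_,
      fun z hxz hyz ↦ ?_⟩
    · change anisotropicReflection hB hy (anisotropicReflection hB hadd x) = y
      rw [anisotropicReflection_sub_apply hB (by simpa using hxy), map_neg,
        anisotropicReflection_apply_self, neg_neg]
    · change anisotropicReflection hB hy (anisotropicReflection hB hadd z) = z
      rw [anisotropicReflection_apply_of_isOrtho hB hadd (by simp [hxz, hyz]),
        anisotropicReflection_apply_of_isOrtho hB hy hyz]
  · exact ⟨anisotropicReflection hB hsub, anisotropicReflection_sub_apply hB hxy hsub,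
      fun z hxz hyz ↦ anisotropicReflection_apply_of_isOrtho hB hsub (by simp [hxz, hyz])⟩

lemma exists_isometryEquiv_apply_eq_of_iIsOrtho [NeZero (2 : K)] (hB : B.IsSymm) {ι : Type*}
    [Finite ι] {v v' : ι → V} (hv : B.iIsOrtho v) (hv' : B.iIsOrtho v')
    (hne : ∀ i, B (v i) (v i) ≠ 0) (heq : ∀ i, B (v' i) (v' i) = B (v i) (v i)) :
    ∃ F : B.IsometryEquiv B, ∀ i, F (v i) = v' i := by
  classical
  have := Fintype.ofFinite ι
  suffices ∀ s : Finset ι, ∃ F : B.IsometryEquiv B, ∀ i ∈ s, F (v i) = v' i by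
    simpa using this Finset.univ
  intro s
  induction s using Finset.induction_on with
  | empty => exact ⟨.refl B, by simp⟩
  | insert i s his ih =>
    obtain ⟨F, hF⟩ := ih
    obtain ⟨R, hRi, hRfix⟩ := exists_isometryEquiv_apply_eq_of_anisotropic hB
      (x := F (v i)) (y := v' i) (by simpa using hne i) (by simpa using heq i)
    refine ⟨F.trans R, Finset.forall_mem_insert .. |>.mpr ⟨hRi, fun j hj ↦ ?_⟩⟩
    have hij : i ≠ j := fun h ↦ his (h ▸ hj)
    change R (F (v j)) = v' j
    rw [hF j hj]
    refine hRfix _ ?_ (hv' hij)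
    rw [← hF j hj, F.map_app]
    exact hv hij

lemma exists_isometryEquiv_extend_of_nondegenerate [NeZero (2 : K)] (hB : B.IsSymm)
    {W : Submodule K V} [FiniteDimensional K W] (hW : (B.restrict W).Nondegenerate)
    (f : B.restrict W →bᵢ B) : ∃ F : B.IsometryEquiv B, ∀ w : W, F w = f w := by
  have := invertibleOfNonzero (two_ne_zero (α := K))
  obtain ⟨b, hb⟩ := exists_orthogonal_basis (isSymm_iff.mp (hB.restrict W))
  have hne := hb.not_isOrtho_basis_self_of_separatingLeft hW.1
  obtain ⟨F, hF⟩ := exists_isometryEquiv_apply_eq_of_iIsOrtho hB (v := fun i ↦ (b i : V))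
    (v' := f ∘ b) hb (fun i j hij ↦ (f.map_app _ _).trans (hb hij)) hne
    (fun i ↦ f.map_app _ _)
  have hcomp : (F : V ≃ₗ[K] V).toLinearMap ∘ₗ W.subtype = f.toLinearMap := b.ext hF
  exact ⟨F, LinearMap.congr_fun hcomp⟩

lemma exists_forall_apply_eq_dual (hB : B.SeparatingRight) {U : Type*} [AddCommGroup U]
    [Module K U] [FiniteDimensional K U] {g : U →ₗ[K] V} (hg : Function.Injective g)
    (l : Module.Dual K U) : ∃ v, ∀ u, B v (g u) = l u := by
  have hinj : Function.Injective (B.compl₂ g).flip := by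
    rw [injective_iff_map_eq_zero]
    intro u hu
    exact (map_eq_zero_iff g hg).mp (hB _ fun v ↦ LinearMap.congr_fun hu v)
  obtain ⟨v, hv⟩ := LinearMap.flip_injective_iff₂.mp hinj l
  exact ⟨v, LinearMap.congr_fun hv⟩

lemma exists_hyperbolic_partner_image [NeZero (2 : K)] (hB : B.IsSymm)
    (hB' : B'.IsSymm) (hnd : B'.SeparatingRight) {W : Submodule K V} [FiniteDimensional K W]
    {f : B.restrict W →bᵢ B'} (hf : Function.Injective f) {r : W}
    (hr : (r : V) ∈ B.orthogonal W) {v : V} (hrv : B r v ≠ 0) :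
    ∃ v', (∀ w : W, B' v' (f w) = B v w) ∧ B' v' v' = B v v := by
  obtain ⟨v₀, hv₀⟩ := exists_forall_apply_eq_dual hnd (g := f.toLinearMap) hf (B v ∘ₗ W.subtype)
  replace hv₀ (w : W) : B' v₀ (f w) = B v w := hv₀ w
  have hfr (w : W) : B' (f r) (f w) = 0 := by
    rw [f.map_app]
    exact hB.isRefl _ _ (hr w w.2)
  have hv₀r : B' v₀ (f r) = B r v := (hv₀ r).trans (hB.eq v r)
  -- Every `v₀ + t • f r` has the required pairings with the image of `f`; as `f r` is isotropic and
  -- `B' v₀ (f r) ≠ 0`, its norm is affine in `t` and takes every value.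
  refine ⟨v₀ + ((B v v - B' v₀ v₀) / (2 * B r v)) • f r, fun w ↦ by simp [hv₀, hfr], ?_⟩
  have := two_ne_zero (α := K)
  simp only [map_add, LinearMap.add_apply, map_smul, LinearMap.smul_apply, smul_eq_mul,
    hB'.eq (f r) v₀, hv₀r, hfr]
  field_simp
  ring

lemma exists_isometry_sup_span_singleton (hB : B.IsSymm) (hB' : B'.IsSymm)
    {W : Submodule K V} (f : B.restrict W →bᵢ B') {v : V} {v' : V'} (hv : v ∉ W)
    (hpair : ∀ w : W, B' v' (f w) = B v w) (hself : B' v' v' = B v v) :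
    ∃ g : B.restrict (W ⊔ K ∙ v) →bᵢ B', ∀ w : W, g ⟨w, Submodule.mem_sup_left w.2⟩ = f w := by
  let g : V →ₗ.[K] V' := LinearPMap.supSpanSingleton ⟨W, f.toLinearMap⟩ v v' hv
  have hdecomp (x : g.domain) : ∃ (w : W) (c : K), (x : V) = w + c • v ∧ g x = f w + c • v' := by
    obtain ⟨x, hx⟩ := x
    obtain ⟨w, hw, _, hz, rfl⟩ := Submodule.mem_sup.mp hx
    obtain ⟨c, rfl⟩ := Submodule.mem_span_singleton.mp hz
    exact ⟨⟨w, hw⟩, c, rfl, LinearPMap.supSpanSingleton_apply_mk _ v v' hv w hw c⟩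
  refine ⟨⟨g.toFun, fun x y ↦ ?_⟩,
    fun w ↦ LinearPMap.supSpanSingleton_apply_mk_of_mem _ v' hv w.2⟩
  change B' (g x) (g y) = B x y
  obtain ⟨w, c, hx, hgx⟩ := hdecomp x
  obtain ⟨u, d, hy, hgy⟩ := hdecomp y
  have hww : B' (f w) (f u) = B w u := f.map_app _ _
  have hwv : B' (f w) v' = B w v := by rw [hB'.eq, hpair, hB.eq]
  simp only [hx, hy, hgx, hgy, map_add, map_smul, LinearMap.add_apply, LinearMap.smul_apply,
    smul_eq_mul, hww, hwv, hpair, hself]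

lemma inf_orthogonal_sup_span_singleton_lt (hB : B.IsRefl) {W : Submodule K V} {r v : V}
    (hr : r ∈ W ⊓ B.orthogonal W) (hrv : B r v ≠ 0) :
    (W ⊔ K ∙ v) ⊓ B.orthogonal (W ⊔ K ∙ v) < W ⊓ B.orthogonal W := by
  have hv : v ∈ W ⊔ K ∙ v := Submodule.mem_sup_right (Submodule.mem_span_singleton_self v)
  refine lt_of_le_of_ne (fun x hx ↦ ⟨?_, orthogonal_le le_sup_left hx.2⟩) fun heq ↦ ?_
  · obtain ⟨w, hw, _, hz, rfl⟩ := Submodule.mem_sup.mp hx.1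
    obtain ⟨c, rfl⟩ := Submodule.mem_span_singleton.mp hz
    have hrw : B r w = 0 := hB _ _ (hr.2 w hw)
    have hc : c = 0 := by
      simpa [hrw, hrv] using hx.2 r (Submodule.mem_sup_left hr.1)
    simpa [hc] using hw
  · exact hrv (hB _ _ ((heq ▸ hr).2 v hv))

lemma mem_orthogonal_of_isometry_apply_eq_zero (hB : B.IsRefl) {W : Submodule K V}
    (f : B.restrict W →bᵢ B') {x : W} (hx : f x = 0) : (x : V) ∈ B.orthogonal W := by
  intro w hw
  refine hB _ _ ?_
  change B.restrict W x ⟨w, hw⟩ = 0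
  rw [← f.map_app, hx, map_zero, LinearMap.zero_apply]

lemma exists_isometry_extend_inf_orthogonal_lt [NeZero (2 : K)] (hB : B.IsSymm)
    (hnd : B.SeparatingLeft) (hB' : B'.IsSymm) (hnd' : B'.SeparatingRight) {W : Submodule K V}
    [FiniteDimensional K W] (f : B.restrict W →bᵢ B') (hf : Function.Injective f)
    (hW : ¬Disjoint W (B.orthogonal W)) :
    ∃ (W' : Submodule K V) (hle : W ≤ W') (_ : FiniteDimensional K W')
      (g : B.restrict W' →bᵢ B'), W' ⊓ B.orthogonal W' < W ⊓ B.orthogonal W ∧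
        Function.Injective g ∧ ∀ w : W, g (Submodule.inclusion hle w) = f w := by
  obtain ⟨r, hr, hr0⟩ := Submodule.exists_mem_ne_zero_of_ne_bot (disjoint_iff.not.mp hW)
  obtain ⟨v, hrv⟩ : ∃ v, B r v ≠ 0 := by
    by_contra! h
    exact hr0 (hnd r h)
  have hvW : v ∉ W := fun hv ↦ hrv (hB.isRefl _ _ (hr.2 v hv))
  obtain ⟨v', hpair, hself⟩ :=
    exists_hyperbolic_partner_image hB hB' hnd' hf (r := ⟨r, hr.1⟩) hr.2 hrv
  obtain ⟨g, hg⟩ := exists_isometry_sup_span_singleton hB hB' f hvW hpair hself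
  have hlt := inf_orthogonal_sup_span_singleton_lt hB.isRefl hr hrv
  refine ⟨W ⊔ K ∙ v, le_sup_left, inferInstance, g, hlt, ?_, hg⟩
  rw [injective_iff_map_eq_zero]
  intro x hgx
  have hxW : (x : V) ∈ W :=
    (hlt.le ⟨x.2, mem_orthogonal_of_isometry_apply_eq_zero hB.isRefl g hgx⟩).1
  have hfx : f ⟨x, hxW⟩ = 0 := (hg ⟨x, hxW⟩).symm.trans hgx
  exact Subtype.ext (Submodule.mk_eq_zero _ hxW |>.mp ((map_eq_zero_iff f hf).mp hfx))

theorem isometry_extends_general [NeZero (2 : K)] (hB : B.IsSymm) (hnd : B.Nondegenerate)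
    {W : Submodule K V} [FiniteDimensional K W] (f : B.restrict W →bᵢ B)
    (hf : Function.Injective f) : ∃ F : B.IsometryEquiv B, ∀ w : W, F w = f w := by
  induction hd : finrank K ↥(W ⊓ B.orthogonal W) using Nat.strong_induction_on
    generalizing W with
  | _ d ih =>
    by_cases hW : Disjoint W (B.orthogonal W)
    · exact exists_isometryEquiv_extend_of_nondegenerate hB
        (nondegenerate_restrict_of_disjoint_orthogonal B hB.isRefl hW) f
    · obtain ⟨W', hle, _, g, hlt, hg, hgf⟩ :=
        exists_isometry_extend_inf_orthogonal_lt hB hnd.1 hB hnd.2 f hf hW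
      obtain ⟨F, hF⟩ := ih _ (hd ▸ Submodule.finrank_lt_finrank_of_lt hlt) g hg rfl
      exact ⟨F, fun w ↦ (hF (Submodule.inclusion hle w)).trans (hgf w)⟩

end WittExtension

/-- If `B` is nondegenerate and `W₁`, `W₂` are subspaces of the same signature, then every
linear isometry `f : W₁ → W₂` extends to a linear isometry of `V`. -/
theorem isometry_extends {V : Type*} [AddCommGroup V] [Module ℝ V] [FiniteDimensional ℝ V]
    (B : LinearMap.BilinForm ℝ V) (hB : ∀ x y, B x y = B y x)
    (hnd : ∀ x : V, (∀ y : V, B x y = 0) → x = 0)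
    (W₁ W₂ : Submodule ℝ V) (hsig : signat B W₁ = signat B W₂)
    (f : W₁ ≃ₗ[ℝ] W₂) (hf : ∀ x y : W₁, B (f x : V) (f y : V) = B (x : V) (y : V)) :
    ∃ F : V ≃ₗ[ℝ] V, (∀ x y : V, B (F x) (F y) = B x y) ∧
      ∀ w : W₁, F (w : V) = (f w : V) := by
  have hnondeg : B.Nondegenerate :=
    (LinearMap.BilinForm.IsSymm.isRefl ⟨hB⟩).nondegenerate_iff_separatingLeft.mpr hnd
  obtain ⟨F, hF⟩ := isometry_extends_general ⟨hB⟩ hnondeg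
    ⟨W₂.subtype ∘ₗ f.toLinearMap, hf⟩ (W₂.subtype_injective.comp f.injective)
  exact ⟨F, fun x y ↦ F.map_app y x, hF⟩
end
end
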